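/- The Kac polynomial of the cyclic quiver Q^K with K+1 vertices satisfies: a_{Q^K, d}(q) = q + K when d \in \mathbb{Z}_{>0} \cdot \delta (a positive imaginary root), and a_{Q^K, d}(q) = 1 when d is a positive real root of \widehat{\mathfrak{sl}}_{K+1}; in particular the number of dimension vectors d with |d| = N supporting absolutely indecomposable representations, weighted by a_{Q^K,d}(1), is: (K+1) + K for each multiple of \delta plus 1 for each real root. -/

import Mathlib

open Matrix

/-- A representation of the cyclic quiver `Q^K` (vertices `ℤ/(K+1)`, arrows
`i → i+1`) of dimension vector `d` over `F`, in matrix form. -/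
def CRep (K : ℕ) (F : Type) (d : Fin (K + 1) → ℕ) : Type :=
  ∀ i : Fin (K + 1), Matrix (Fin (d (i + 1))) (Fin (d i)) F

/-- Isomorphism of representations. -/
def CIso (K : ℕ) (F : Type) [Field F] (d : Fin (K + 1) → ℕ)
    (r r' : CRep K F d) : Prop :=
  ∃ g : ∀ i : Fin (K + 1), Matrix (Fin (d i)) (Fin (d i)) F,
    (∀ i, IsUnit (g i)) ∧ ∀ i, g (i + 1) * r i = r' i * g i

/-- Direct sum of representations. -/
def cdsum (K : ℕ) (F : Type) [Field F] {d₁ d₂ : Fin (K + 1) → ℕ}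
    (r₁ : CRep K F d₁) (r₂ : CRep K F d₂) : CRep K F (d₁ + d₂) :=
  fun i => Matrix.reindex finSumFinEquiv finSumFinEquiv
    (Matrix.fromBlocks (r₁ i) 0 0 (r₂ i))

/-- A representation is decomposable if it is isomorphic to a direct sum of two
nonzero representations. -/
def CDecomp (K : ℕ) (F : Type) [Field F] (d : Fin (K + 1) → ℕ)
    (r : CRep K F d) : Prop :=
  ∃ d₁ d₂ : Fin (K + 1) → ℕ, d₁ ≠ 0 ∧ d₂ ≠ 0 ∧
    ∃ (h : d = d₁ + d₂) (r₁ : CRep K F d₁) (r₂ : CRep K F d₂),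
      CIso K F (d₁ + d₂) (h ▸ r) (cdsum K F r₁ r₂)

/-- Indecomposability. -/
def CIndec (K : ℕ) (F : Type) [Field F] (d : Fin (K + 1) → ℕ)
    (r : CRep K F d) : Prop :=
  d ≠ 0 ∧ ¬ CDecomp K F d r

/-- Base change of a representation along a field homomorphism. -/
def mapCRep (K : ℕ) {F F' : Type} (d : Fin (K + 1) → ℕ)
    (φ : F → F') (r : CRep K F d) : CRep K F' d :=
  fun i => (r i).map φ

/-- Absolute indecomposability: the representation stays indecomposable over every
field extension (equivalently, over the algebraic closure). -/
def CAbsIndec (K : ℕ) (F : Type) [Field F] (d : Fin (K + 1) → ℕ)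
    (r : CRep K F d) : Prop :=
  ∀ (F' : Type) [Field F'] (φ : F →+* F'), CIndec K F' d (mapCRep K d φ r)

/-- The number of isomorphism classes of absolutely indecomposable representations of
the cyclic quiver of dimension `d` over `F`; for `F = 𝔽_q` this is the value
`a_{Q^K, d}(q)` of the Kac polynomial. -/
noncomputable def kacCount (K : ℕ) (F : Type) [Field F]
    (d : Fin (K + 1) → ℕ) : ℕ :=
  Nat.card (Quot (fun r r' : { r : CRep K F d // CAbsIndec K F d r } =>
    CIso K F d r.1 r'.1))

/-- The Tits form of the cyclic quiver: `d ≠ 0` is a positive real root of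
`ŝl_{K+1}` iff `qform K d = 1`, and a positive imaginary root iff `qform K d = 0`,
i.e. `d ∈ ℤ_{>0}·δ`. -/
def qform (K : ℕ) (d : Fin (K + 1) → ℕ) : ℤ :=
  (∑ i, (d i : ℤ) ^ 2) - ∑ i : Fin (K + 1), (d i : ℤ) * (d (i + 1) : ℤ)


/-- the vertex reached after `t` steps -/
def pos {K : ℕ} (i : Fin (K + 1)) : ℕ → Fin (K + 1)
  | 0 => i
  | t + 1 => pos i t + 1

section abstractPart
variable {K : ℕ} {F : Type} [Field F] {M : Type} [AddCommGroup M] [Module F M]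

theorem pow_proj {P : Fin (K + 1) → Module.End F M} {N : Module.End F M}
    (hNP : ∀ i x, N (P i x) = P (i + 1) (N x)) (i : Fin (K + 1)) (t : ℕ) (x : M) :
    (N ^ t) (P i x) = P (pos i t) ((N ^ t) x) := by
  induction t with
  | zero => simp [pos]
  | succ t ih => rw [pow_succ', Module.End.mul_apply, ih, hNP, Module.End.mul_apply, pos]

theorem cyclic_dichotomy [FiniteDimensional F M] [Nontrivial M]
    (P : Fin (K + 1) → Module.End F M) (N : Module.End F M) (hN : IsNilpotent N)
    (hNP : ∀ i x, N (P i x) = P (i + 1) (N x))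
    (hPP : ∀ i x, P i (P i x) = P i x)
    (hPQ : ∀ i j x, i ≠ j → P i (P j x) = 0)
    (hsum : ∀ x, ∑ i, P i x = x) :
    (∃ U W : Submodule F M, IsCompl U W ∧ U ≠ ⊥ ∧ W ≠ ⊥ ∧
      (∀ x ∈ U, N x ∈ U) ∧ (∀ x ∈ W, N x ∈ W) ∧
      (∀ i, ∀ x ∈ U, P i x ∈ U) ∧ (∀ i, ∀ x ∈ W, P i x ∈ W)) ∨
    ∃ (i : Fin (K + 1)) (b : Module.Basis (Fin (Module.finrank F M)) F M),
      (∀ t : Fin _, P (pos i t) (b t) = b t) ∧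
      (∀ t, N (b t) = if h : (t : ℕ) + 1 < Module.finrank F M then b ⟨t + 1, h⟩ else 0) := by
  classical
  obtain ⟨m, hm0, hm⟩ : ∃ m, N ^ m ≠ 0 ∧ N ^ (m + 1) = 0 := by
    have hz : N ^ 0 ≠ 0 := by simp
    have h1 := Nat.find_spec hN
    have h0 : Nat.find hN ≠ 0 := by
      intro h; rw [h] at h1; exact hz h1
    obtain ⟨m, hm⟩ := Nat.exists_eq_succ_of_ne_zero h0
    refine ⟨m, ?_, ?_⟩
    · apply Nat.find_min hN; omega
    · rw [hm] at h1; exact h1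
  have hbig : ∀ j, m < j → ∀ x, (N ^ j) x = 0 := by
    intro j hj x
    obtain ⟨k, rfl⟩ := Nat.exists_eq_add_of_lt hj
    rw [show m + k + 1 = k + (m + 1) by ring, pow_add, hm, mul_zero]; rfl
  obtain ⟨i, v, hv, hmv⟩ : ∃ i v, P i v = v ∧ (N ^ m) v ≠ 0 := by
    by_contra hcon
    push Not at hcon
    apply hm0
    ext x
    rw [← hsum x, map_sum]
    simp only [LinearMap.zero_apply]
    exact Finset.sum_eq_zero fun i _ => hcon i _ (hPP i x)
  obtain ⟨φ0, hφ0⟩ : ∃ φ : Module.Dual F M, φ ((N ^ m) v) = 1 := by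
    obtain ⟨f, hf⟩ : ∃ f : Module.Dual F M, f ((N ^ m) v) ≠ 0 := by
      by_contra hc
      push Not at hc
      exact hmv ((Module.forall_dual_apply_eq_zero_iff F _).1 hc)
    exact ⟨(f ((N ^ m) v))⁻¹ • f, by simp [hf]⟩
  set φ : Module.Dual F M := φ0.comp (P (pos i m)) with hφd
  have hPv : ∀ t, P (pos i t) ((N ^ t) v) = (N ^ t) v := fun t => by
    rw [← pow_proj hNP, hv]
  have hφ : φ ((N ^ m) v) = 1 := by simp [hφd, hPv, hφ0]
  set U : Submodule F M := Submodule.span F (Set.range fun t : ℕ => (N ^ t) v) with hU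
  set W : Submodule F M := ⨅ t : ℕ, LinearMap.ker (φ.comp (N ^ t)) with hW
  have memW : ∀ x, x ∈ W ↔ ∀ t : ℕ, φ ((N ^ t) x) = 0 := fun x => by
    simp [hW, Submodule.mem_iInf]
  have hUt : ∀ t, (N ^ t) v ∈ U := fun t => Submodule.subset_span ⟨t, rfl⟩
  have hUN : ∀ x ∈ U, N x ∈ U := by
    intro x hx
    induction hx using Submodule.span_induction with
    | mem x hx =>
      obtain ⟨t, rfl⟩ := hx
      have := hUt (t + 1)
      rwa [pow_succ', Module.End.mul_apply] at this
    | zero => simp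
    | add x y _ _ h1 h2 => rw [map_add]; exact U.add_mem h1 h2
    | smul c x _ h1 => rw [map_smul]; exact U.smul_mem c h1
  have hUP : ∀ j, ∀ x ∈ U, P j x ∈ U := by
    intro j x hx
    induction hx using Submodule.span_induction with
    | mem x hx =>
      obtain ⟨t, rfl⟩ := hx
      by_cases hj : j = pos i t
      · subst hj; simp only [hPv]; exact hUt t
      · simp only []
        rw [← hPv t, hPQ _ _ _ hj]; exact U.zero_mem
    | zero => simp
    | add x y _ _ h1 h2 => rw [map_add]; exact U.add_mem h1 h2
    | smul c x _ h1 => rw [map_smul]; exact U.smul_mem c h1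
  have hWN : ∀ x ∈ W, N x ∈ W := by
    intro x hx
    rw [memW] at hx ⊢
    intro t
    have := hx (t + 1)
    rwa [pow_succ, Module.End.mul_apply] at this
  have hWP : ∀ j, ∀ x ∈ W, P j x ∈ W := by
    intro j x hx
    rw [memW] at hx ⊢
    intro t
    rw [pow_proj hNP]
    by_cases hj : pos i m = pos j t
    · have := hx t
      simp only [hφd, LinearMap.comp_apply] at this ⊢
      rw [hj] at this ⊢
      rw [hPP]; exact this
    · simp only [hφd, LinearMap.comp_apply]
      rw [hPQ _ _ _ hj, map_zero]
  have hsplit : ∀ y ∈ U, ∃ c : F, ∃ y' ∈ U, y = c • v + N y' := by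
    intro y hy
    induction hy using Submodule.span_induction with
    | mem x hx =>
      obtain ⟨t, rfl⟩ := hx
      cases t with
      | zero => exact ⟨1, 0, U.zero_mem, by simp⟩
      | succ t => exact ⟨0, _, hUt t, by simp [pow_succ']⟩
    | zero => exact ⟨0, 0, U.zero_mem, by simp⟩
    | add x y _ _ h1 h2 =>
      obtain ⟨c, x', hx', rfl⟩ := h1
      obtain ⟨c2, y', hy', rfl⟩ := h2
      exact ⟨c + c2, x' + y', U.add_mem hx' hy', by rw [map_add, add_smul]; abel⟩
    | smul c x _ h1 =>
      obtain ⟨c1, x', hx', rfl⟩ := h1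
      exact ⟨c * c1, c • x', U.smul_mem _ hx', by rw [map_smul, smul_add, mul_smul]⟩
  have hdis : ∀ u ∈ U, u ∈ W → u = 0 := by
    intro u hu huW
    rw [memW] at huW
    have key : ∀ t, t ≤ m + 1 → ∃ y ∈ U, u = (N ^ t) y := by
      intro t
      induction t with
      | zero => intro _; exact ⟨u, hu, by simp⟩
      | succ t ih =>
        intro ht
        obtain ⟨y, hy, rfl⟩ := ih (by omega)
        obtain ⟨c, y', hy', rfl⟩ := hsplit y hy
        have h1 := huW (m - t)
        rw [← Module.End.mul_apply, ← pow_add, show m - t + t = m by omega, map_add,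
          ← Module.End.mul_apply (N ^ m) N, ← pow_succ, hbig _ (Nat.lt_succ_self m), add_zero,
          map_smul, map_smul, hφ] at h1
        have hc : c = 0 := by simpa using h1
        exact ⟨y', hy', by rw [hc, zero_smul, zero_add, pow_succ, Module.End.mul_apply]⟩
    obtain ⟨y, _, rfl⟩ := key (m + 1) le_rfl
    exact hbig _ (Nat.lt_succ_self m) _
  have hcod : ∀ x, ∃ u ∈ U, x - u ∈ W := by
    intro x
    have key : ∀ t, t ≤ m + 1 → ∃ u ∈ U, ∀ j, m + 1 - t ≤ j → φ ((N ^ j) (x - u)) = 0 := by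
      intro t
      induction t with
      | zero => intro _; exact ⟨0, U.zero_mem, fun j hj => by rw [hbig j (by omega), map_zero]⟩
      | succ t ih =>
        intro ht
        obtain ⟨u, hu, hj⟩ := ih (by omega)
        refine ⟨u + φ ((N ^ (m - t)) (x - u)) • (N ^ t) v,
          U.add_mem hu (U.smul_mem _ (hUt t)), fun j hjt => ?_⟩
        rw [← sub_sub, map_sub, map_sub, map_smul, map_smul, ← Module.End.mul_apply (N ^ j),
          ← pow_add]
        rcases Nat.lt_or_ge (m - t) j with h | h
        · rw [hj j (by omega), hbig (j + t) (by omega)]; simp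
        · have : j = m - t := by omega
          subst this
          rw [show m - t + t = m by omega, hφ]; simp
    obtain ⟨u, hu, h⟩ := key (m + 1) le_rfl
    exact ⟨u, hu, (memW _).2 fun t => h t (by omega)⟩
  have hcompl : IsCompl U W := by
    constructor
    · rw [Submodule.disjoint_def]; exact hdis
    · rw [codisjoint_iff, eq_top_iff]
      intro x _
      obtain ⟨u, hu, hw⟩ := hcod x
      rw [Submodule.mem_sup]
      exact ⟨u, hu, _, hw, by abel⟩
  have hUne : U ≠ ⊥ := by
    intro h
    have := hUt m
    rw [h, Submodule.mem_bot] at this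
    exact hmv this
  by_cases hWb : W = ⊥
  swap
  · exact Or.inl ⟨U, W, hcompl, hUne, hWb, hUN, hWN, hUP, hWP⟩
  right
  have hUtop : U = ⊤ := by
    have := hcompl.sup_eq_top
    rwa [hWb, sup_bot_eq] at this
  set n := Module.finrank F M with hn
  have hn_le : n ≤ m + 1 := by
    have h1 : U ≤ Submodule.span F (Set.range fun t : Fin (m + 1) => (N ^ (t : ℕ)) v) := by
      rw [hU, Submodule.span_le]
      rintro _ ⟨t, rfl⟩
      rcases Nat.lt_or_ge t (m + 1) with h | h
      · exact Submodule.subset_span ⟨⟨t, h⟩, rfl⟩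
      · simp only [hbig t (by omega)]; exact Submodule.zero_mem _
    have h2 := finrank_range_le_card (R := F) (fun t : Fin (m + 1) => (N ^ (t : ℕ)) v)
    rw [Set.finrank] at h2
    rw [hUtop, top_le_iff] at h1
    rw [h1, finrank_top, Fintype.card_fin] at h2
    exact h2
  have hNn : N ^ n = 0 := by
    have := (LinearMap.isNilpotent_iff_charpoly N).1 hN
    have h2 := LinearMap.aeval_self_charpoly N
    rw [this] at h2
    simpa using h2
  have hmn : m + 1 = n := by
    by_contra hne
    have : n ≤ m := by omega
    apply hmv
    obtain ⟨k, rfl⟩ := Nat.exists_eq_add_of_le this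
    rw [add_comm, pow_add, hNn, mul_zero]; rfl
  have hspan : ⊤ ≤ Submodule.span F (Set.range fun t : Fin n => (N ^ (t : ℕ)) v) := by
    rw [← hUtop, hU, Submodule.span_le]
    rintro _ ⟨t, rfl⟩
    rcases Nat.lt_or_ge t n with h | h
    · exact Submodule.subset_span ⟨⟨t, h⟩, rfl⟩
    · simp only [hbig t (by omega)]; exact Submodule.zero_mem _
  have hcard : Fintype.card (Fin n) = Module.finrank F M := by simp [hn]
  have hli := linearIndependent_of_top_le_span_of_card_eq_finrank hspan hcard
  refine ⟨i, Module.Basis.mk hli hspan, fun t => ?_, fun t => ?_⟩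
  · rw [Module.Basis.mk_apply, hPv]
  · rw [Module.Basis.mk_apply]
    split_ifs with h
    · rw [Module.Basis.mk_apply, ← Module.End.mul_apply, ← pow_succ']
    · rw [← Module.End.mul_apply, ← pow_succ', hbig _ (by omega)]

/-- a nilpotent operator preserving a nontrivial decomposition has small order -/
theorem pow_eq_zero_of_isCompl [FiniteDimensional F M] (S : Module.End F M) (hS : IsNilpotent S)
    (U W : Submodule F M) (hc : IsCompl U W) (hU : U ≠ ⊥) (hW : W ≠ ⊥)
    (hSU : ∀ x ∈ U, S x ∈ U) (hSW : ∀ x ∈ W, S x ∈ W) :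
    S ^ (Module.finrank F M - 1) = 0 := by
  have aux : ∀ V : Submodule F M, (∀ x ∈ V, S x ∈ V) → ∀ k, Module.finrank F V ≤ k →
      ∀ x ∈ V, (S ^ k) x = 0 := by
    intro V hV k hk x hx
    have hn : IsNilpotent (S.restrict hV) := Module.End.isNilpotent.restrict hV hS
    have h1 := (LinearMap.isNilpotent_iff_charpoly _).1 hn
    have h2 := LinearMap.aeval_self_charpoly (S.restrict hV)
    rw [h1] at h2
    simp only [map_pow, Polynomial.aeval_X] at h2
    obtain ⟨j, rfl⟩ := Nat.exists_eq_add_of_le hk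
    rw [add_comm, pow_add, Module.End.mul_apply]
    have h3 := congrArg (fun f => ((f ⟨x, hx⟩ : V) : M)) h2
    simp only [Module.End.pow_restrict _ hV, LinearMap.coe_restrict_apply, LinearMap.zero_apply,
      Submodule.coe_zero] at h3
    rw [h3, map_zero]
  have hdim := Submodule.finrank_add_eq_of_isCompl hc
  have hU1 : 0 < Module.finrank F U := Module.finrank_pos_iff.2 (Submodule.nontrivial_iff_ne_bot.2 hU)
  have hW1 : 0 < Module.finrank F W := Module.finrank_pos_iff.2 (Submodule.nontrivial_iff_ne_bot.2 hW)
  ext x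
  have hx : x ∈ U ⊔ W := by rw [hc.sup_eq_top]; trivial
  obtain ⟨u, hu, w, hw, rfl⟩ := Submodule.mem_sup.1 hx
  rw [map_add, aux U hSU _ (by omega) u hu, aux W hSW _ (by omega) w hw]
  simp

theorem fitting_compl [FiniteDimensional F M] (S : Module.End F M) :
    ∃ n, IsCompl (LinearMap.ker (S ^ n)) (LinearMap.range (S ^ n)) ∧ 1 ≤ n := by
  have h := (LinearMap.eventually_isCompl_ker_pow_range_pow S).and
    (Filter.eventually_ge_atTop 1)
  exact h.exists

end abstractPart


section bridge
variable {K : ℕ} {F : Type} [Field F] {d : Fin (K + 1) → ℕ}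

theorem CIso.refl' (r : CRep K F d) : CIso K F d r r :=
  ⟨fun _ => 1, fun _ => isUnit_one, fun i => by
    rw [Matrix.one_mul, Matrix.mul_one]⟩

theorem CIso.symm' {r r' : CRep K F d} (h : CIso K F d r r') : CIso K F d r' r := by
  obtain ⟨g, hg, hc⟩ := h
  have hd : ∀ i, IsUnit (g i).det := fun i => (Matrix.isUnit_iff_isUnit_det _).1 (hg i)
  refine ⟨fun i => (g i)⁻¹, fun i => Matrix.isUnit_nonsing_inv_iff.2 (hg i), fun i => ?_⟩
  have h1 : (g (i + 1))⁻¹ * (g (i + 1) * r i) * (g i)⁻¹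
      = (g (i + 1))⁻¹ * (r' i * g i) * (g i)⁻¹ := by rw [hc i]
  rw [Matrix.nonsing_inv_mul_cancel_left _ _ (hd _), Matrix.mul_assoc, Matrix.mul_assoc,
    Matrix.mul_nonsing_inv _ (hd i), Matrix.mul_one] at h1
  exact h1.symm

theorem CIso.trans' {r r' r'' : CRep K F d} (h : CIso K F d r r') (h' : CIso K F d r' r'') :
    CIso K F d r r'' := by
  obtain ⟨g, hg, hc⟩ := h
  obtain ⟨g', hg', hc'⟩ := h'
  refine ⟨fun i => g' i * g i, fun i => (hg' i).mul (hg i), fun i => ?_⟩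
  rw [Matrix.mul_assoc, hc, ← Matrix.mul_assoc, hc', Matrix.mul_assoc]

theorem CDecomp.of_iso {r r' : CRep K F d} (h : CIso K F d r r') (h' : CDecomp K F d r') :
    CDecomp K F d r := by
  obtain ⟨d₁, d₂, h1, h2, hd, r₁, r₂, hi⟩ := h'
  subst hd
  exact ⟨d₁, d₂, h1, h2, rfl, r₁, r₂, h.trans' hi⟩

theorem CIso.map' {F' : Type} [Field F'] (φ : F →+* F') {r r' : CRep K F d}
    (h : CIso K F d r r') : CIso K F' d (mapCRep K d φ r) (mapCRep K d φ r') := by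
  obtain ⟨g, hg, hc⟩ := h
  refine ⟨fun i => (g i).map φ, fun i => ?_, fun i => ?_⟩
  · exact (hg i).map (φ.mapMatrix : Matrix (Fin (d i)) (Fin (d i)) F →+* _)
  · have := congrArg (fun A => A.map φ) (hc i)
    simp only [Matrix.map_mul] at this
    exact this

theorem CAbsIndec.of_iso {r r' : CRep K F d} (h : CIso K F d r r') (h' : CAbsIndec K F d r) :
    CAbsIndec K F d r' := fun F' _ φ =>
  ⟨(h' F' φ).1, fun hd => (h' F' φ).2 (hd.of_iso (h.map' φ))⟩

noncomputable def splitEquiv (F : Type) [Field F] (a b : ℕ) :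
    (Fin (a + b) → F) ≃ₗ[F] (Fin a → F) × (Fin b → F) :=
  (LinearEquiv.funCongrLeft F F finSumFinEquiv).trans
    (LinearEquiv.sumArrowLequivProdArrow (Fin a) (Fin b) F F)

theorem splitEquiv_blocks {a b a' b' : ℕ} (A : Matrix (Fin a') (Fin a) F)
    (B : Matrix (Fin b') (Fin b) F) (y : Fin (a + b) → F) :
    splitEquiv F a' b' ((Matrix.reindex finSumFinEquiv finSumFinEquiv
      (Matrix.fromBlocks A 0 0 B)) *ᵥ y) =
      (A *ᵥ (splitEquiv F a b y).1, B *ᵥ (splitEquiv F a b y).2) := by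
  ext i
  · simp [splitEquiv, LinearEquiv.funCongrLeft, LinearMap.funLeft, Matrix.mulVec, dotProduct,
      LinearEquiv.sumArrowLequivProdArrow, Equiv.sumArrowEquivProdArrow, Fin.sum_univ_add]
  · simp [splitEquiv, LinearEquiv.funCongrLeft, LinearMap.funLeft, Matrix.mulVec, dotProduct,
      LinearEquiv.sumArrowLequivProdArrow, Equiv.sumArrowEquivProdArrow, Fin.sum_univ_add]

/-- decomposition through families of subspaces -/
def DFam (r : CRep K F d) : Prop :=
  ∃ U W : ∀ i, Submodule F (Fin (d i) → F), (∀ i, IsCompl (U i) (W i)) ∧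
    (∀ i, ∀ x ∈ U i, r i *ᵥ x ∈ U (i + 1)) ∧ (∀ i, ∀ x ∈ W i, r i *ᵥ x ∈ W (i + 1)) ∧
    (∃ i, U i ≠ ⊥) ∧ ∃ i, W i ≠ ⊥

theorem CDecomp.dfam {r : CRep K F d} (h : CDecomp K F d r) : DFam r := by
  obtain ⟨d₁, d₂, h1, h2, hd, r₁, r₂, g, hg, hc⟩ := h
  subst hd
  have hc' : ∀ i, g (i + 1) * r i = cdsum K F r₁ r₂ i * g i := hc
  have hdet : ∀ i, IsUnit (g i).det := fun i => (Matrix.isUnit_iff_isUnit_det _).1 (hg i)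
  let e : ∀ i, (Fin ((d₁ + d₂) i) → F) ≃ₗ[F] (Fin (d₁ i) → F) × (Fin (d₂ i) → F) := fun i =>
    (Matrix.toLinearEquiv' (g i) ((g i).invertibleOfIsUnitDet (hdet i))).trans
      (splitEquiv F (d₁ i) (d₂ i))
  have he : ∀ i x, e (i + 1) (r i *ᵥ x) = (r₁ i *ᵥ (e i x).1, r₂ i *ᵥ (e i x).2) := by
    intro i x
    have h3 : e (i + 1) (r i *ᵥ x) = splitEquiv F (d₁ (i + 1)) (d₂ (i + 1))
        (g (i + 1) *ᵥ (r i *ᵥ x)) := rfl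
    rw [h3, Matrix.mulVec_mulVec, hc', ← Matrix.mulVec_mulVec]
    exact splitEquiv_blocks _ _ _
  have hne : ∀ (f : Fin (K + 1) → ℕ), f ≠ 0 → ∃ i, f i ≠ 0 := fun f hf => Function.ne_iff.1 hf
  refine ⟨fun i => LinearMap.ker (LinearMap.snd F _ _ ∘ₗ (e i).toLinearMap),
    fun i => LinearMap.ker (LinearMap.fst F _ _ ∘ₗ (e i).toLinearMap), fun i => ?_, ?_, ?_, ?_, ?_⟩
  · constructor
    · rw [Submodule.disjoint_def]
      intro x hx hx'
      simp only [LinearMap.mem_ker, LinearMap.comp_apply, LinearEquiv.coe_coe, LinearMap.fst_apply,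
        LinearMap.snd_apply] at hx hx'
      exact (e i).map_eq_zero_iff.1 (Prod.ext hx' hx)
    · rw [codisjoint_iff, eq_top_iff]
      intro x _
      rw [Submodule.mem_sup]
      refine ⟨(e i).symm ((e i x).1, 0), by simp, (e i).symm (0, (e i x).2), by simp, ?_⟩
      rw [← map_add]
      simp
  · intro i x hx
    simp only [LinearMap.mem_ker, LinearMap.comp_apply, LinearEquiv.coe_coe,
        LinearMap.snd_apply] at hx ⊢
    rw [he, hx]; simp
  · intro i x hx
    simp only [LinearMap.mem_ker, LinearMap.comp_apply, LinearEquiv.coe_coe,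
        LinearMap.fst_apply] at hx ⊢
    rw [he, hx]; simp
  · obtain ⟨i, hi⟩ := hne d₁ h1
    refine ⟨i, fun h => ?_⟩
    have : NeZero (d₁ i) := ⟨hi⟩
    have hm : (e i).symm (fun _ => 1, 0) ∈
      LinearMap.ker (LinearMap.snd F _ _ ∘ₗ (e i).toLinearMap) := by simp
    replace h : LinearMap.ker (LinearMap.snd F _ _ ∘ₗ (e i).toLinearMap) = ⊥ := h
    rw [h, Submodule.mem_bot, (e i).symm.map_eq_zero_iff] at hm
    have := congrFun (congrArg Prod.fst hm) 0
    simp at this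
  · obtain ⟨i, hi⟩ := hne d₂ h2
    refine ⟨i, fun h => ?_⟩
    have : NeZero (d₂ i) := ⟨hi⟩
    have hm : (e i).symm (0, fun _ => 1) ∈
      LinearMap.ker (LinearMap.fst F _ _ ∘ₗ (e i).toLinearMap) := by simp
    replace h : LinearMap.ker (LinearMap.fst F _ _ ∘ₗ (e i).toLinearMap) = ⊥ := h
    rw [h, Submodule.mem_bot, (e i).symm.map_eq_zero_iff] at hm
    have := congrFun (congrArg Prod.snd hm) 0
    simp at this

theorem CDecomp.of_equiv {d₁ d₂ : Fin (K + 1) → ℕ} (hd : d = d₁ + d₂) (h1 : d₁ ≠ 0) (h2 : d₂ ≠ 0)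
    (r : CRep K F d) (r₁ : CRep K F d₁) (r₂ : CRep K F d₂)
    (e : ∀ i, (Fin (d i) → F) ≃ₗ[F] (Fin (d₁ i) → F) × (Fin (d₂ i) → F))
    (he : ∀ i x, e (i + 1) (r i *ᵥ x) = (r₁ i *ᵥ (e i x).1, r₂ i *ᵥ (e i x).2)) :
    CDecomp K F d r := by
  subst hd
  let f : ∀ i, (Fin ((d₁ + d₂) i) → F) ≃ₗ[F] (Fin ((d₁ + d₂) i) → F) := fun i =>
    (e i).trans (splitEquiv F (d₁ i) (d₂ i)).symm
  refine ⟨d₁, d₂, h1, h2, rfl, r₁, r₂, fun i => LinearMap.toMatrix' (f i).toLinearMap,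
    fun i => ?_, fun i => ?_⟩
  · rw [Matrix.isUnit_iff_isUnit_det, LinearMap.det_toMatrix']
    exact LinearEquiv.isUnit_det' _
  · apply Matrix.toLin'.injective
    ext1 x
    apply LinearMap.ext_ring
    change Matrix.toLin' (LinearMap.toMatrix' (f (i + 1)).toLinearMap * r i) (Pi.single x 1) =
      Matrix.toLin' (cdsum K F r₁ r₂ i * LinearMap.toMatrix' (f i).toLinearMap) (Pi.single x 1)
    generalize (Pi.single x 1 : Fin ((d₁ + d₂) i) → F) = y
    rw [Matrix.toLin'_apply, Matrix.toLin'_apply, ← Matrix.mulVec_mulVec, ← Matrix.mulVec_mulVec,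
      LinearMap.toMatrix'_mulVec, LinearMap.toMatrix'_mulVec]
    apply (splitEquiv F (d₁ (i + 1)) (d₂ (i + 1))).injective
    have h3 := splitEquiv_blocks (r₁ i) (r₂ i) (f i y)
    have h4 : splitEquiv F (d₁ i) (d₂ i) (f i y) = e i y := by simp [f]
    have h5 : splitEquiv F (d₁ (i + 1)) (d₂ (i + 1)) (f (i + 1) (r i *ᵥ y))
      = e (i + 1) (r i *ᵥ y) := by simp [f]
    rw [h4, ← he, ← h5] at h3
    exact h3.symm

theorem DFam.cdecomp {r : CRep K F d} (h : DFam r) : CDecomp K F d r := by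
  obtain ⟨U, W, hc, hU, hW, ⟨iU, hUi⟩, ⟨iW, hWi⟩⟩ := h
  let eU : ∀ i, U i ≃ₗ[F] (Fin (Module.finrank F (U i)) → F) := fun i =>
    (Module.finBasis F (U i)).equivFun
  let eW : ∀ i, W i ≃ₗ[F] (Fin (Module.finrank F (W i)) → F) := fun i =>
    (Module.finBasis F (W i)).equivFun
  let e : ∀ i, (Fin (d i) → F) ≃ₗ[F]
      (Fin (Module.finrank F (U i)) → F) × (Fin (Module.finrank F (W i)) → F) := fun i =>
    (Submodule.prodEquivOfIsCompl (U i) (W i) (hc i)).symm.trans ((eU i).prodCongr (eW i))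
  let fU : ∀ i, U i →ₗ[F] U (i + 1) := fun i => (Matrix.toLin' (r i)).restrict
    (fun x hx => by rw [Matrix.toLin'_apply]; exact hU i x hx)
  let fW : ∀ i, W i →ₗ[F] W (i + 1) := fun i => (Matrix.toLin' (r i)).restrict
    (fun x hx => by rw [Matrix.toLin'_apply]; exact hW i x hx)
  refine CDecomp.of_equiv (d₁ := fun i => Module.finrank F (U i))
    (d₂ := fun i => Module.finrank F (W i)) ?_ ?_ ?_ r
    (fun i => LinearMap.toMatrix' ((eU (i + 1)).toLinearMap ∘ₗ fU i ∘ₗ (eU i).symm.toLinearMap))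
    (fun i => LinearMap.toMatrix' ((eW (i + 1)).toLinearMap ∘ₗ fW i ∘ₗ (eW i).symm.toLinearMap))
    e ?_
  · funext i
    have := Submodule.finrank_add_eq_of_isCompl (hc i)
    simp only [Module.finrank_fin_fun] at this
    exact this.symm
  · intro h
    have h1 := congrFun h iU
    exact hUi (Submodule.finrank_eq_zero.1 h1)
  · intro h
    have h1 := congrFun h iW
    exact hWi (Submodule.finrank_eq_zero.1 h1)
  · intro i x
    obtain ⟨⟨u, w⟩, rfl⟩ := (Submodule.prodEquivOfIsCompl (U i) (W i) (hc i)).surjective x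
    have h1 : e i ((Submodule.prodEquivOfIsCompl (U i) (W i) (hc i)) (u, w)) = (eU i u, eW i w) := by
      simp [e]
    have h2 : r i *ᵥ ((Submodule.prodEquivOfIsCompl (U i) (W i) (hc i)) (u, w)) =
        (Submodule.prodEquivOfIsCompl (U (i + 1)) (W (i + 1)) (hc (i + 1))) (fU i u, fW i w) := by
      rw [Submodule.coe_prodEquivOfIsCompl', Submodule.coe_prodEquivOfIsCompl', Matrix.mulVec_add]
      rfl
    rw [h2, h1]
    rw [LinearMap.toMatrix'_mulVec, LinearMap.toMatrix'_mulVec]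
    simp [e]

end bridge


section total
variable {K : ℕ} {F : Type} [Field F] {d : Fin (K + 1) → ℕ}

/-- total space -/
abbrev Tot (F : Type) (d : Fin (K + 1) → ℕ) : Type := ∀ i, Fin (d i) → F

/-- total operator -/
noncomputable def totN (r : CRep K F d) : Module.End F (Tot F d) :=
  (LinearEquiv.piCongrLeft F (fun j => Fin (d j) → F) (Equiv.addRight (1 : Fin (K + 1)))).toLinearMap
    ∘ₗ LinearMap.pi (fun i => (Matrix.mulVecLin (r i)) ∘ₗ LinearMap.proj i)

theorem totN_apply (r : CRep K F d) (y : Tot F d) (i : Fin (K + 1)) :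
    totN r y (i + 1) = r i *ᵥ y i := by
  have := Equiv.piCongrLeft_apply_apply (fun j => Fin (d j) → F) (Equiv.addRight (1 : Fin (K + 1)))
    (fun i => r i *ᵥ y i) i
  exact this

/-- projection to a vertex -/
noncomputable def totP (F : Type) [Field F] (d : Fin (K + 1) → ℕ) (i : Fin (K + 1)) :
    Module.End F (Tot F d) :=
  LinearMap.single F (fun j => Fin (d j) → F) i ∘ₗ LinearMap.proj i

theorem totP_apply (i : Fin (K + 1)) (y : Tot F d) : totP F d i y = Pi.single i (y i) := rfl

theorem totN_single (r : CRep K F d) (i : Fin (K + 1)) (x : Fin (d i) → F) :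
    totN r (Pi.single i x) = Pi.single (i + 1) (r i *ᵥ x) := by
  funext j
  obtain ⟨k, rfl⟩ : ∃ k, j = k + 1 := ⟨j - 1, by simp⟩
  rw [totN_apply]
  by_cases h : k = i
  · subst h; simp
  · have h' : k + 1 ≠ i + 1 := fun hh => h (add_right_cancel hh)
    rw [Pi.single_eq_of_ne h, Pi.single_eq_of_ne h', Matrix.mulVec_zero]

theorem totNP (r : CRep K F d) (i : Fin (K + 1)) (y : Tot F d) :
    totN r (totP F d i y) = totP F d (i + 1) (totN r y) := by
  rw [totP_apply, totP_apply, totN_single, totN_apply]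

theorem totPP (i : Fin (K + 1)) (y : Tot F d) : totP F d i (totP F d i y) = totP F d i y := by
  simp [totP_apply]

theorem totPQ (i j : Fin (K + 1)) (y : Tot F d) (h : i ≠ j) : totP F d i (totP F d j y) = 0 := by
  simp [totP_apply, h]

theorem totP_sum (y : Tot F d) : ∑ i, totP F d i y = y := by
  simp only [totP_apply]
  exact Finset.univ_sum_single y

theorem dfam_of_tot (r : CRep K F d) (U W : Submodule F (Tot F d)) (hc : IsCompl U W)
    (hU0 : U ≠ ⊥) (hW0 : W ≠ ⊥) (hUN : ∀ x ∈ U, totN r x ∈ U) (hWN : ∀ x ∈ W, totN r x ∈ W)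
    (hUP : ∀ i, ∀ x ∈ U, totP F d i x ∈ U) (hWP : ∀ i, ∀ x ∈ W, totP F d i x ∈ W) : DFam r := by
  have hne : ∀ V : Submodule F (Tot F d), V ≠ ⊥ → (∀ i, ∀ x ∈ V, totP F d i x ∈ V) →
      ∃ i, V.comap (LinearMap.single F (fun j => Fin (d j) → F) i) ≠ ⊥ := by
    intro V hV hP
    by_contra hcon
    push Not at hcon
    apply hV
    rw [eq_bot_iff]
    intro x hx
    rw [Submodule.mem_bot]
    funext i
    have h1 : x i ∈ V.comap (LinearMap.single F (fun j => Fin (d j) → F) i) := hP i x hx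
    rw [hcon i, Submodule.mem_bot] at h1
    exact h1
  refine ⟨fun i => U.comap (LinearMap.single F (fun j => Fin (d j) → F) i),
    fun i => W.comap (LinearMap.single F (fun j => Fin (d j) → F) i), fun i => ?_, ?_, ?_,
    hne U hU0 hUP, hne W hW0 hWP⟩
  · constructor
    · rw [Submodule.disjoint_def]
      intro x hx hx'
      have := (Submodule.disjoint_def.1 hc.disjoint) _ hx hx'
      simpa using this
    · rw [codisjoint_iff, eq_top_iff]
      intro x _
      have hx : (Pi.single i x : Tot F d) ∈ U ⊔ W := by rw [hc.sup_eq_top]; trivial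
      obtain ⟨u, hu, w, hw, huw⟩ := Submodule.mem_sup.1 hx
      rw [Submodule.mem_sup]
      refine ⟨u i, hUP i u hu, w i, hWP i w hw, ?_⟩
      have := congrFun huw i
      simpa using this
  · intro i x hx
    have := hUN _ hx
    rwa [LinearMap.coe_single, totN_single] at this
  · intro i x hx
    have := hWN _ hx
    rwa [LinearMap.coe_single, totN_single] at this

theorem DFam.tot {r : CRep K F d} (h : DFam r) :
    ∃ U W : Submodule F (Tot F d), IsCompl U W ∧ U ≠ ⊥ ∧ W ≠ ⊥ ∧
      (∀ x ∈ U, totN r x ∈ U) ∧ (∀ x ∈ W, totN r x ∈ W) := by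
  obtain ⟨U, W, hc, hU, hW, ⟨iU, hUi⟩, ⟨iW, hWi⟩⟩ := h
  have inv : ∀ V : ∀ i, Submodule F (Fin (d i) → F), (∀ i, ∀ x ∈ V i, r i *ᵥ x ∈ V (i + 1)) →
      ∀ x ∈ Submodule.pi Set.univ V, totN r x ∈ Submodule.pi Set.univ V := by
    intro V hV x hx
    rw [Submodule.mem_pi] at hx ⊢
    intro j _
    obtain ⟨k, rfl⟩ : ∃ k, j = k + 1 := ⟨j - 1, by simp⟩
    rw [totN_apply]
    exact hV _ _ (hx k trivial)
  have nb : ∀ (V : ∀ i, Submodule F (Fin (d i) → F)) (i), V i ≠ ⊥ →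
      Submodule.pi Set.univ V ≠ ⊥ := by
    intro V i hi hbot
    apply hi
    rw [eq_bot_iff]
    intro x hx
    have hx' : (Pi.single i x : Tot F d) ∈ Submodule.pi Set.univ V := by
      rw [Submodule.mem_pi]
      intro j _
      by_cases hj : j = i
      · subst hj; simpa using hx
      · rw [Pi.single_eq_of_ne hj]; exact Submodule.zero_mem _
    rw [hbot, Submodule.mem_bot] at hx'
    simpa using hx'
  refine ⟨Submodule.pi Set.univ U, Submodule.pi Set.univ W, ?_, nb U iU hUi, nb W iW hWi,
    inv U hU, inv W hW⟩
  constructor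
  · rw [Submodule.disjoint_def]
    intro x hx hx'
    rw [Submodule.mem_pi] at hx hx'
    funext i
    exact (Submodule.disjoint_def.1 (hc i).disjoint) _ (hx i trivial) (hx' i trivial)
  · rw [codisjoint_iff, eq_top_iff]
    intro x _
    have : ∀ i, ∃ u ∈ U i, ∃ w ∈ W i, u + w = x i := by
      intro i
      have hx : x i ∈ U i ⊔ W i := by rw [(hc i).sup_eq_top]; trivial
      exact Submodule.mem_sup.1 hx
    choose u hu w hw huw using this
    rw [Submodule.mem_sup]
    exact ⟨u, Submodule.mem_pi.2 fun i _ => hu i, w, Submodule.mem_pi.2 fun i _ => hw i,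
      funext huw⟩

theorem CIso.tot {r r' : CRep K F d} (h : CIso K F d r r') :
    ∃ G : Tot F d ≃ₗ[F] Tot F d, (∀ x, G (totN r x) = totN r' (G x)) ∧
      ∀ i x, G (totP F d i x) = totP F d i (G x) := by
  obtain ⟨g, hg, hc⟩ := h
  have hdet : ∀ i, IsUnit (g i).det := fun i => (Matrix.isUnit_iff_isUnit_det _).1 (hg i)
  let G : Tot F d ≃ₗ[F] Tot F d := LinearEquiv.piCongrRight fun i =>
    Matrix.toLinearEquiv' (g i) ((g i).invertibleOfIsUnitDet (hdet i))
  have hG : ∀ x i, G x i = g i *ᵥ x i := fun x i => rfl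
  refine ⟨G, fun x => ?_, fun i x => ?_⟩
  · funext j
    obtain ⟨k, rfl⟩ : ∃ k, j = k + 1 := ⟨j - 1, by simp⟩
    rw [hG, totN_apply, totN_apply, hG, Matrix.mulVec_mulVec, Matrix.mulVec_mulVec, hc]
  · funext j
    rw [hG, totP_apply, totP_apply]
    by_cases hj : j = i
    · subst hj; simp [hG]
    · simp [Pi.single_eq_of_ne hj]

theorem CIso.of_tot {r r' : CRep K F d} (G : Tot F d ≃ₗ[F] Tot F d)
    (hN : ∀ x, G (totN r x) = totN r' (G x))
    (hP : ∀ i x, G (totP F d i x) = totP F d i (G x)) : CIso K F d r r' := by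
  have hsing : ∀ i (x : Fin (d i) → F), G (Pi.single i x) = Pi.single i (G (Pi.single i x) i) := by
    intro i x
    have := hP i (Pi.single i x)
    simpa [totP_apply] using this
  let f : ∀ i, (Fin (d i) → F) →ₗ[F] (Fin (d i) → F) := fun i =>
    LinearMap.proj i ∘ₗ G.toLinearMap ∘ₗ LinearMap.single F (fun j => Fin (d j) → F) i
  have hf : ∀ i x, f i x = G (Pi.single i x) i := fun i x => rfl
  refine ⟨fun i => LinearMap.toMatrix' (f i), fun i => ?_, fun i => ?_⟩
  · rw [Matrix.isUnit_iff_isUnit_det, LinearMap.det_toMatrix']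
    rw [← LinearMap.isUnit_iff_isUnit_det, Module.End.isUnit_iff]
    have hinj : Function.Injective (f i) := by
      rw [injective_iff_map_eq_zero]
      intro x hx
      have h1 := hsing i x
      rw [← hf, hx, Pi.single_zero, G.map_eq_zero_iff] at h1
      simpa using h1
    exact ⟨hinj, LinearMap.injective_iff_surjective.1 hinj⟩
  · apply Matrix.toLin'.injective
    apply LinearMap.ext
    intro x
    rw [Matrix.toLin'_apply, Matrix.toLin'_apply, ← Matrix.mulVec_mulVec, ← Matrix.mulVec_mulVec,
      LinearMap.toMatrix'_mulVec, LinearMap.toMatrix'_mulVec, hf, hf]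
    have := congrFun (hN (Pi.single i x)) (i + 1)
    rwa [totN_single, totN_apply] at this

theorem finrank_tot : Module.finrank F (Tot F d) = ∑ i, d i := by
  rw [Module.finrank_pi_fintype]; simp

/-- a uniserial basis starting at vertex `i` -/
def Unis (r : CRep K F d) (n : ℕ) (i : Fin (K + 1)) (b : Module.Basis (Fin n) F (Tot F d)) : Prop :=
  (∀ t : Fin n, totP F d (pos i t) (b t) = b t) ∧
  (∀ t : Fin n, totN r (b t) = if h : (t : ℕ) + 1 < n then b ⟨t + 1, h⟩ else 0)

theorem Unis.iso {r r' : CRep K F d} {n : ℕ} {i : Fin (K + 1)}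
    {b b' : Module.Basis (Fin n) F (Tot F d)} (h : Unis r n i b) (h' : Unis r' n i b') :
    CIso K F d r r' := by
  have hb : ∀ t, (b.equiv b' (Equiv.refl _)) (b t) = b' t := fun t => by simp
  refine CIso.of_tot (b.equiv b' (Equiv.refl _)) (fun x => ?_) (fun j x => ?_)
  · have : (b.equiv b' (Equiv.refl _)).toLinearMap ∘ₗ totN r =
        totN r' ∘ₗ (b.equiv b' (Equiv.refl _)).toLinearMap := by
      apply b.ext
      intro t
      simp only [LinearMap.comp_apply, LinearEquiv.coe_coe]
      rw [hb, h.2, h'.2]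
      split_ifs with hh
      · rw [hb]
      · simp
    exact LinearMap.congr_fun this x
  · have : (b.equiv b' (Equiv.refl _)).toLinearMap ∘ₗ totP F d j =
        totP F d j ∘ₗ (b.equiv b' (Equiv.refl _)).toLinearMap := by
      apply b.ext
      intro t
      simp only [LinearMap.comp_apply, LinearEquiv.coe_coe]
      rw [hb]
      by_cases hj : j = pos i t
      · subst hj; rw [h.1, h'.1, hb]
      · rw [← h.1, ← h'.1, totPQ _ _ _ hj, totPQ _ _ _ hj, map_zero]
    exact LinearMap.congr_fun this x

theorem Unis.pow {r : CRep K F d} {n : ℕ} {i : Fin (K + 1)}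
    {b : Module.Basis (Fin n) F (Tot F d)} (h : Unis r n i b) (s : ℕ) (t : Fin n) :
    (totN r ^ s) (b t) = if h : (t : ℕ) + s < n then b ⟨t + s, h⟩ else 0 := by
  induction s with
  | zero => simp
  | succ s ih =>
    rw [pow_succ', Module.End.mul_apply, ih]
    by_cases h1 : (t : ℕ) + s < n
    · rw [dif_pos h1, h.2]; rfl
    · rw [dif_neg h1, dif_neg (by omega), map_zero]

theorem Unis.nilp {r : CRep K F d} {n : ℕ} {i : Fin (K + 1)}
    {b : Module.Basis (Fin n) F (Tot F d)} (h : Unis r n i b) : IsNilpotent (totN r) := by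
  refine ⟨n, b.ext fun t => ?_⟩
  rw [h.pow, dif_neg (by omega)]; rfl

theorem Unis.not_dfam {r : CRep K F d} {n : ℕ} {i : Fin (K + 1)}
    {b : Module.Basis (Fin n) F (Tot F d)} (hn : 0 < n) (h : Unis r n i b) : ¬ DFam r := by
  intro hd
  obtain ⟨U, W, hc, hU, hW, hUN, hWN⟩ := hd.tot
  have h1 := pow_eq_zero_of_isCompl (totN r) h.nilp U W hc hU hW hUN hWN
  have hfr : Module.finrank F (Tot F d) = n := by rw [Module.finrank_eq_card_basis b]; simp
  rw [hfr] at h1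
  have h2 := h.pow (n - 1) ⟨0, hn⟩
  rw [h1, dif_pos (by simp; omega)] at h2
  exact b.ne_zero _ h2.symm

theorem Unis.start_unique {r r' : CRep K F d} {n : ℕ} {i i' : Fin (K + 1)} (hn : 0 < n)
    {b b' : Module.Basis (Fin n) F (Tot F d)} (h : Unis r n i b) (h' : Unis r' n i' b')
    (hi : CIso K F d r r') : i = i' := by
  by_contra hne
  obtain ⟨G, hGN, hGP⟩ := hi.tot
  have hz : ∀ x, (totN r' ^ (n - 1)) (totP F d i x) = 0 := by
    have : (totN r' ^ (n - 1)) ∘ₗ totP F d i = 0 := by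
      apply b'.ext
      intro t
      rw [LinearMap.comp_apply, LinearMap.zero_apply]
      by_cases ht : (t : ℕ) = 0
      · rw [← h'.1 t, ht, pos, totPQ _ _ _ hne, map_zero]
      · rw [pow_proj (totNP r'), h'.pow, dif_neg (by omega), map_zero]
    exact fun x => LinearMap.congr_fun this x
  have hGpow : ∀ s x, G ((totN r ^ s) x) = (totN r' ^ s) (G x) := by
    intro s
    induction s with
    | zero => intro x; simp
    | succ s ih =>
      intro x
      rw [pow_succ', Module.End.mul_apply, hGN, ih, pow_succ', Module.End.mul_apply]
  have h1 := hz (G (b ⟨0, hn⟩))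
  rw [← hGP, ← hGpow, G.map_eq_zero_iff] at h1
  have h2 := h.1 ⟨0, hn⟩
  simp only [pos] at h2
  rw [h2, h.pow, dif_pos (by simp; omega)] at h1
  exact b.ne_zero _ h1

/-- the Fitting dichotomy for indecomposable representations -/
theorem fitting_rep (r : CRep K F d) (hr : ¬ DFam r) :
    IsNilpotent (totN r) ∨ Function.Injective (totN r) := by
  obtain ⟨n, hc, hn⟩ := fitting_compl (totN r)
  by_cases hW : LinearMap.range (totN r ^ n) = ⊥
  · left; exact ⟨n, LinearMap.range_eq_bot.1 hW⟩
  by_cases hU : LinearMap.ker (totN r ^ n) = ⊥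
  · right
    rw [LinearMap.ker_eq_bot] at hU
    obtain ⟨m, rfl⟩ := Nat.exists_eq_add_of_le' hn
    rw [pow_succ] at hU
    exact Function.Injective.of_comp (f := (totN r ^ m)) hU
  exfalso
  apply hr
  refine dfam_of_tot r _ _ hc hU hW ?_ ?_ ?_ ?_
  · intro x hx
    rw [LinearMap.mem_ker] at hx ⊢
    rw [← Module.End.mul_apply, ← pow_succ, pow_succ', Module.End.mul_apply, hx, map_zero]
  · rintro _ ⟨x, rfl⟩
    exact ⟨totN r x, by rw [← Module.End.mul_apply, ← pow_succ, pow_succ', Module.End.mul_apply]⟩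
  · intro i x hx
    rw [LinearMap.mem_ker] at hx ⊢
    rw [pow_proj (totNP r), hx, map_zero]
  · rintro i _ ⟨x, rfl⟩
    have hpos : ∀ n : ℕ, ∀ i : Fin (K + 1), ∃ j, pos j n = i := by
      intro n
      induction n with
      | zero => exact fun i => ⟨i, rfl⟩
      | succ n ih =>
        intro i
        obtain ⟨j, hj⟩ := ih (i - 1)
        exact ⟨j, by rw [pos, hj]; simp⟩
    obtain ⟨j, rfl⟩ := hpos n i
    exact ⟨totP F d j x, pow_proj (totNP r) j n x⟩

theorem nilp_unis (r : CRep K F d) (hd : d ≠ 0) (hr : ¬ DFam r) (hN : IsNilpotent (totN r)) :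
    ∃ i b, Unis r (∑ i, d i) i b := by
  obtain ⟨i, hi⟩ := Function.ne_iff.1 hd
  have hpos : 0 < Module.finrank F (Tot F d) := by
    rw [finrank_tot]
    exact Finset.sum_pos' (fun _ _ => Nat.zero_le _) ⟨i, Finset.mem_univ _, Nat.pos_of_ne_zero hi⟩
  have : Nontrivial (Tot F d) := Module.finrank_pos_iff.1 hpos
  rcases cyclic_dichotomy (totP F d) (totN r) hN (totNP r) totPP totPQ totP_sum with h | h
  · obtain ⟨U, W, hc, hU, hW, h1, h2, h3, h4⟩ := h
    exact absurd (dfam_of_tot r U W hc hU hW h1 h2 h3 h4) hr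
  · rw [finrank_tot] at h
    exact h

/-- dimension vector of the uniserial representation of length `n` starting at `i` -/
def udim (n : ℕ) (i j : Fin (K + 1)) : ℕ := Fintype.card {t : Fin n // pos i t = j}

theorem udim_sum (n : ℕ) (i : Fin (K + 1)) : ∑ j, udim n i j = n := by
  unfold udim
  rw [← Fintype.card_sigma, Fintype.card_congr (Equiv.sigmaFiberEquiv (fun t : Fin n => pos i t))]
  simp

theorem Unis.dim {r : CRep K F d} {n : ℕ} {i : Fin (K + 1)}
    {b : Module.Basis (Fin n) F (Tot F d)} (h : Unis r n i b) : d = udim n i := by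
  have hle : ∀ j, udim n i j ≤ d j := by
    intro j
    have h1 : LinearIndependent F (fun t : {t : Fin n // pos i t = j} => b t.1) :=
      b.linearIndependent.comp _ Subtype.val_injective
    have h2 : LinearIndependent F (fun t : {t : Fin n // pos i t = j} => b t.1 j) := by
      apply LinearIndependent.of_comp (LinearMap.single F (fun j => Fin (d j) → F) j)
      convert h1 using 1
      funext t
      have := h.1 t.1
      rw [t.2, totP_apply] at this
      exact this
    have := h2.fintype_card_le_finrank
    rwa [Module.finrank_fin_fun] at this
  have hs : ∑ j, udim n i j = ∑ j, d j := by
    rw [udim_sum, ← finrank_tot (F := F), Module.finrank_eq_card_basis b]; simp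
  funext j
  exact ((Finset.sum_eq_sum_iff_of_le fun j _ => hle j).1 hs j (Finset.mem_univ _)).symm

end total


section std
variable {K : ℕ} {F : Type} [Field F]

/-- enumeration of the basis vectors over the vertex `j` -/
noncomputable def uenum (n : ℕ) (i j : Fin (K + 1)) :
    Fin (udim n i j) ≃ {t : Fin n // pos i t = j} := (Fintype.equivFin _).symm

/-- standard uniserial representation -/
noncomputable def stdR (F : Type) [Field F] (n : ℕ) (i : Fin (K + 1)) : CRep K F (udim n i) :=
  fun j => Matrix.of fun a b =>
    if ((uenum n i (j + 1) a).1 : ℕ) = (uenum n i j b).1 + 1 then 1 else 0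

theorem mapCRep_stdR {F' : Type} [Field F'] (φ : F →+* F') (n : ℕ) (i : Fin (K + 1)) :
    mapCRep K (udim n i) φ (stdR F n i) = stdR F' n i := by
  funext j
  ext a b
  simp only [mapCRep, stdR, Matrix.map_apply, Matrix.of_apply]
  split_ifs <;> simp

theorem stdR_unis (F : Type) [Field F] (n : ℕ) (i : Fin (K + 1)) :
    ∃ b, Unis (stdR F n i) n i b := by
  classical
  let e : (Σ j, Fin (udim n i j)) ≃ Fin n :=
    (Equiv.sigmaCongrRight (fun j => uenum n i j)).trans
      (Equiv.sigmaFiberEquiv (fun t : Fin n => pos i t))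
  have he : ∀ j a, e ⟨j, a⟩ = (uenum n i j a).1 := fun j a => rfl
  have hpe : ∀ j a, pos i (e ⟨j, a⟩) = j := fun j a => (uenum n i j a).2
  let b0 : Module.Basis (Σ j, Fin (udim n i j)) F (Tot F (udim n i)) :=
    Pi.basis (fun j => Pi.basisFun F (Fin (udim n i j)))
  have hb : ∀ j a, (b0.reindex e) (e ⟨j, a⟩) = Pi.single j (Pi.single a 1) := by
    intro j a
    rw [Module.Basis.reindex_apply, Equiv.symm_apply_apply, Pi.basis_apply]
    simp
  refine ⟨b0.reindex e, fun t => ?_, fun t => ?_⟩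
  · obtain ⟨⟨j, a⟩, rfl⟩ := e.surjective t
    rw [hb, hpe, totP_apply]; simp
  · obtain ⟨⟨j, a⟩, rfl⟩ := e.surjective t
    rw [hb, totN_single, Matrix.mulVec_single_one]
    split_ifs with h
    · obtain ⟨⟨j', a'⟩, h'⟩ := e.surjective ⟨(e ⟨j, a⟩ : ℕ) + 1, h⟩
      have hj' : j' = j + 1 := by
        rw [← hpe j' a', h']
        simp only [pos]
        rw [hpe]
      subst hj'
      rw [← h', hb]
      congr 1
      funext c
      simp only [stdR, Matrix.col_apply, Matrix.of_apply]
      rw [← he, ← he]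
      have h'' : ((e ⟨j + 1, a'⟩ : Fin n) : ℕ) = e ⟨j, a⟩ + 1 := by rw [h']
      rw [← h'']
      by_cases hc : c = a'
      · subst hc; simp
      · rw [Pi.single_eq_of_ne hc, if_neg]
        intro hh
        have h3 := e.injective (Fin.ext hh)
        simp only [Sigma.mk.injEq, heq_eq_eq, true_and] at h3
        exact hc h3
    · have : (stdR F n i j).col a = 0 := by
        funext c
        simp only [stdR, Matrix.col_apply, Matrix.of_apply, Pi.zero_apply]
        rw [if_neg]
        intro hh
        apply h
        rw [he, ← hh]
        exact Fin.is_lt _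
      rw [this, Pi.single_zero]

theorem exists_std (F : Type) [Field F] (d : Fin (K + 1) → ℕ) (n : ℕ) (hn : 0 < n)
    (i : Fin (K + 1)) (hd : d = udim n i) :
    ∃ r : CRep K F d, CAbsIndec K F d r ∧ ∃ b, Unis r n i b := by
  subst hd
  refine ⟨stdR F n i, fun F' _ φ => ⟨?_, fun h => ?_⟩, stdR_unis F n i⟩
  · intro h0
    have := udim_sum n i
    rw [h0] at this
    simp at this
    omega
  · rw [mapCRep_stdR] at h
    obtain ⟨b, hb⟩ := stdR_unis F' n i
    exact hb.not_dfam hn h.dfam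

/-- indecomposable for the trivial extension -/
theorem CAbsIndec.indec {d : Fin (K + 1) → ℕ} {r : CRep K F d} (h : CAbsIndec K F d r) :
    d ≠ 0 ∧ ¬ DFam r := by
  obtain ⟨h0, h1⟩ := h F (RingHom.id F)
  refine ⟨h0, fun h => h1 ?_⟩
  have : mapCRep K d (RingHom.id F) r = r := by
    funext i; ext a b; rfl
  rw [this]
  exact h.cdecomp

theorem dim_of_injective {d : Fin (K + 1) → ℕ} (r : CRep K F d)
    (h : Function.Injective (totN r)) : (∀ i, Function.Injective (r i).mulVec) ∧
      ∀ i, d (i + 1) = d i := by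
  have h1 : ∀ i, Function.Injective (r i).mulVec := by
    intro i x y hxy
    have : totN r (Pi.single i x) = totN r (Pi.single i y) := by
      rw [totN_single, totN_single, hxy]
    exact Pi.single_injective i (h this)
  refine ⟨h1, ?_⟩
  have hle : ∀ i, d i ≤ d (i + 1) := by
    intro i
    have := LinearMap.finrank_le_finrank_of_injective (f := (r i).mulVecLin) (h1 i)
    simpa using this
  have hs : ∑ i, d i = ∑ i, d (i + 1) := (Equiv.sum_comp (Equiv.addRight (1 : Fin (K + 1))) d).symm
  intro i
  exact ((Finset.sum_eq_sum_iff_of_le fun j _ => hle j).1 hs i (Finset.mem_univ _)).symm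

end std

section jordan
variable {K : ℕ} {F : Type} [Field F] {l : ℕ}

/-- representation with a single nontrivial arrow -/
def oneR (K : ℕ) (A : Matrix (Fin l) (Fin l) F) : CRep K F (fun _ => l) :=
  fun i => (if i = Fin.last K then A else 1 : Matrix (Fin l) (Fin l) F)

theorem mapCRep_oneR {F' : Type} [Field F'] (φ : F →+* F') (A : Matrix (Fin l) (Fin l) F) :
    mapCRep K (fun _ => l) φ (oneR K A) = oneR K (A.map φ) := by
  funext i
  change Matrix.map (if i = Fin.last K then A else 1 : Matrix (Fin l) (Fin l) F) φ =
    (if i = Fin.last K then A.map φ else 1 : Matrix (Fin l) (Fin l) F')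
  split_ifs
  · rfl
  · exact Matrix.map_one _ (map_zero φ) (map_one φ)

theorem oneR_iso (A B g : Matrix (Fin l) (Fin l) F) (hg : IsUnit g) (h : g * A = B * g) :
    CIso K F (fun _ => l) (oneR K A) (oneR K B) := by
  refine ⟨fun _ => g, fun _ => hg, fun i => ?_⟩
  change g * (if i = Fin.last K then A else 1 : Matrix (Fin l) (Fin l) F) =
    (if i = Fin.last K then B else 1 : Matrix (Fin l) (Fin l) F) * g
  split_ifs
  · exact h
  · simp

theorem oneR_iso_conv (A B : Matrix (Fin l) (Fin l) F)
    (h : CIso K F (fun _ => l) (oneR K A) (oneR K B)) :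
    ∃ g : Matrix (Fin l) (Fin l) F, IsUnit g ∧ g * A = B * g := by
  obtain ⟨g, hg, hc⟩ := h
  replace hc : ∀ i, (g (i + 1) : Matrix (Fin l) (Fin l) F) *
    (if i = Fin.last K then A else 1 : Matrix (Fin l) (Fin l) F) =
    (if i = Fin.last K then B else 1 : Matrix (Fin l) (Fin l) F) * g i := hc
  have hg0 : ∀ i, (g i : Matrix (Fin l) (Fin l) F) = g 0 := by
    intro i
    induction i using Fin.induction with
    | zero => rfl
    | succ i ih =>
      have := hc i.castSucc
      rw [if_neg (Fin.castSucc_lt_last i).ne, if_neg (Fin.castSucc_lt_last i).ne,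
        Matrix.mul_one, Matrix.one_mul, Fin.coeSucc_eq_succ] at this
      rw [this, ih]
  refine ⟨g 0, hg 0, ?_⟩
  have := hc (Fin.last K)
  rw [if_pos rfl, if_pos rfl, hg0, hg0 (Fin.last K)] at this
  exact this

/-- normal form for representations with invertible maps -/
theorem exists_oneR_iso (r : CRep K F (fun _ => l)) (h : ∀ i, Function.Injective (r i).mulVec) :
    ∃ A : Matrix (Fin l) (Fin l) F, IsUnit A ∧ CIso K F (fun _ => l) r (oneR K A) := by
  let s : Fin (K + 1) → Matrix (Fin l) (Fin l) F := fun i => r i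
  have hs : ∀ i, IsUnit (s i) := fun i => Matrix.mulVec_injective_iff_isUnit.1 (h i)
  have hdet : ∀ i, IsUnit (s i).det := fun i => (Matrix.isUnit_iff_isUnit_det _).1 (hs i)
  let g : Fin (K + 1) → Matrix (Fin l) (Fin l) F := fun i =>
    Fin.induction (motive := fun _ => Matrix (Fin l) (Fin l) F) 1
      (fun i gi => gi * (s i.castSucc)⁻¹) i
  have hg0 : g 0 = 1 := rfl
  have hgs : ∀ i : Fin K, g i.succ = g i.castSucc * (s i.castSucc)⁻¹ := fun i => rfl
  have hgu : ∀ i, IsUnit (g i) := by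
    intro i
    induction i using Fin.induction with
    | zero => rw [hg0]; exact isUnit_one
    | succ i ih => rw [hgs]; exact ih.mul (Matrix.isUnit_nonsing_inv_iff.2 (hs _))
  have hgd : ∀ i, IsUnit (g i).det := fun i => (Matrix.isUnit_iff_isUnit_det _).1 (hgu i)
  refine ⟨s (Fin.last K) * (g (Fin.last K))⁻¹,
    (hs _).mul (Matrix.isUnit_nonsing_inv_iff.2 (hgu _)), g, hgu, fun i => ?_⟩
  change g (i + 1) * s i = (if i = Fin.last K then s (Fin.last K) * (g (Fin.last K))⁻¹ else 1 :
    Matrix (Fin l) (Fin l) F) * g i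
  split_ifs with hi
  · subst hi
    rw [Fin.last_add_one, hg0, Matrix.one_mul, Matrix.nonsing_inv_mul_cancel_right _ _ (hgd _)]
  · obtain ⟨j, rfl⟩ : ∃ j : Fin K, j.castSucc = i := ⟨i.castPred hi, by simp⟩
    rw [Fin.coeSucc_eq_succ, hgs, Matrix.nonsing_inv_mul_cancel_right _ _ (hdet _), Matrix.one_mul]

/-- a decomposition of the matrix gives one of the representation -/
theorem oneR_dfam (A : Matrix (Fin l) (Fin l) F) (U W : Submodule F (Fin l → F))
    (hc : IsCompl U W) (hU0 : U ≠ ⊥) (hW0 : W ≠ ⊥) (hU : ∀ x ∈ U, A *ᵥ x ∈ U)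
    (hW : ∀ x ∈ W, A *ᵥ x ∈ W) : DFam (oneR K A) := by
  have key : ∀ V : Submodule F (Fin l → F), (∀ x ∈ V, A *ᵥ x ∈ V) → ∀ i : Fin (K + 1), ∀ x ∈ V,
      (if i = Fin.last K then A else 1 : Matrix (Fin l) (Fin l) F) *ᵥ x ∈ V := by
    intro V hV i x hx
    split_ifs
    · exact hV x hx
    · rwa [Matrix.one_mulVec]
  exact ⟨fun _ => U, fun _ => W, fun _ => hc, key U hU, key W hW, ⟨0, hU0⟩, ⟨0, hW0⟩⟩

theorem DFam.oneR_conv {A : Matrix (Fin l) (Fin l) F} (hA : IsUnit A) (h : DFam (oneR K A)) :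
    ∃ U W : Submodule F (Fin l → F), IsCompl U W ∧ U ≠ ⊥ ∧ W ≠ ⊥ ∧ (∀ x ∈ U, A *ᵥ x ∈ U) ∧
      ∀ x ∈ W, A *ᵥ x ∈ W := by
  obtain ⟨U, W, hc, hU, hW, hUi, hWi⟩ := h
  have key : ∀ V : Fin (K + 1) → Submodule F (Fin l → F), (∀ i, ∀ x ∈ V i,
      (if i = Fin.last K then A else 1 : Matrix (Fin l) (Fin l) F) *ᵥ x ∈ V (i + 1)) →
      (∃ i, V i ≠ ⊥) → V 0 ≠ ⊥ ∧ ∀ x ∈ V 0, A *ᵥ x ∈ V 0 := by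
    intro V hV hVi
    have hstep : ∀ i : Fin K, V i.castSucc ≤ V i.succ := by
      intro i x hx
      have := hV i.castSucc x hx
      rwa [if_neg (Fin.castSucc_lt_last i).ne, Matrix.one_mulVec, Fin.coeSucc_eq_succ] at this
    have hlast : ∀ x ∈ V (Fin.last K), A *ᵥ x ∈ V 0 := by
      intro x hx
      have := hV (Fin.last K) x hx
      rwa [if_pos rfl, Fin.last_add_one] at this
    have hmono : Monotone V := Fin.monotone_iff_le_succ.2 hstep
    refine ⟨fun h0 => ?_, fun x hx => hlast x (hmono (Fin.le_last 0) hx)⟩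
    obtain ⟨i, hi⟩ := hVi
    apply hi
    rw [eq_bot_iff]
    intro x hx
    have h1 := hlast x (hmono (Fin.le_last i) hx)
    rw [h0, Submodule.mem_bot] at h1
    have h2 := Matrix.mulVec_injective_iff_isUnit.2 hA
    rw [Submodule.mem_bot]
    exact h2 (h1.trans (Matrix.mulVec_zero A).symm)
  obtain ⟨a, b⟩ := key U hU hUi
  obtain ⟨c, e⟩ := key W hW hWi
  exact ⟨U 0, W 0, hc 0, a, c, b, e⟩

/-- nilpotent shift -/
def shiftM (F : Type) [Field F] (l : ℕ) : Matrix (Fin l) (Fin l) F :=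
  Matrix.of fun a b => if (a : ℕ) = b + 1 then 1 else 0

/-- Jordan block -/
def jordanM (l : ℕ) (c : F) : Matrix (Fin l) (Fin l) F := shiftM F l + Matrix.scalar (Fin l) c

theorem shiftM_single (t : Fin l) : shiftM F l *ᵥ (Pi.single t 1) =
    if h : (t : ℕ) + 1 < l then Pi.single ⟨t + 1, h⟩ 1 else 0 := by
  rw [Matrix.mulVec_single_one]
  funext a
  simp only [Matrix.col_apply, shiftM, Matrix.of_apply]
  split_ifs with h1 h2 h2
  · rw [show a = ⟨t + 1, h2⟩ from Fin.ext h1]; simp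
  · omega
  · rw [Pi.single_eq_of_ne]
    intro hh; rw [hh] at h1; simp at h1
  · rfl

theorem shiftM_pow_single (s : ℕ) (t : Fin l) : (shiftM F l ^ s) *ᵥ (Pi.single t 1) =
    if h : (t : ℕ) + s < l then Pi.single ⟨t + s, h⟩ 1 else 0 := by
  induction s with
  | zero => rw [pow_zero, Matrix.one_mulVec]; simp
  | succ s ih =>
    rw [pow_succ', ← Matrix.mulVec_mulVec, ih]
    by_cases h1 : (t : ℕ) + s < l
    · rw [dif_pos h1, shiftM_single]; rfl
    · rw [dif_neg h1, dif_neg (by omega), Matrix.mulVec_zero]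

theorem shiftM_nilp : shiftM F l ^ l = 0 := by
  apply Matrix.ext_of_mulVec_single
  intro t
  rw [shiftM_pow_single, dif_neg (by omega), Matrix.zero_mulVec]

theorem shiftM_pow_ne (hl : 0 < l) : shiftM F l ^ (l - 1) ≠ 0 := by
  intro h
  have := shiftM_pow_single (F := F) (l - 1) ⟨0, hl⟩
  rw [h, dif_pos (by simp; omega), Matrix.zero_mulVec] at this
  have h2 := congrFun this ⟨0 + (l - 1), by omega⟩
  simp at h2

theorem jordanM_isUnit {c : F} (hc : c ≠ 0) : IsUnit (jordanM l c) := by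
  have h1 : IsUnit (Matrix.scalar (Fin l) c) := (IsUnit.mk0 c hc).map _
  have h2 : IsNilpotent (shiftM F l) := ⟨l, shiftM_nilp⟩
  exact h2.isUnit_add_right_of_commute h1 (Matrix.scalar_commute c (fun _ => Commute.all _ _) _).symm

theorem jordanM_map {F' : Type} [Field F'] (φ : F →+* F') (c : F) :
    (jordanM l c).map φ = jordanM l (φ c) := by
  ext a b
  simp only [jordanM, shiftM, Matrix.map_apply, Matrix.add_apply, Matrix.of_apply, map_add,
    Matrix.scalar_apply, Matrix.diagonal_apply]
  split_ifs <;> simp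

theorem jordanM_not_dfam (hl : 0 < l) {c : F} (hc : c ≠ 0) : ¬ DFam (oneR K (jordanM l c)) := by
  intro h
  obtain ⟨U, W, hcp, hU0, hW0, hU, hW⟩ := h.oneR_conv (jordanM_isUnit hc)
  have key : ∀ V : Submodule F (Fin l → F), (∀ x ∈ V, jordanM l c *ᵥ x ∈ V) →
      ∀ x ∈ V, Matrix.toLin' (shiftM F l) x ∈ V := by
    intro V hV x hx
    have h1 := V.sub_mem (hV x hx) (V.smul_mem c hx)
    convert h1 using 1
    rw [Matrix.toLin'_apply, jordanM, Matrix.add_mulVec]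
    simp
  have hp : ∀ k, Matrix.toLin' (shiftM F l) ^ k = Matrix.toLin' (shiftM F l ^ k) := fun k =>
    (Matrix.toLin'_pow _ _).symm
  have h1 := pow_eq_zero_of_isCompl (Matrix.toLin' (shiftM F l))
    ⟨l, by rw [hp, shiftM_nilp, map_zero]⟩ U W hcp hU0 hW0 (key U hU) (key W hW)
  rw [hp, Module.finrank_fin_fun] at h1
  exact shiftM_pow_ne hl ((LinearEquiv.map_eq_zero_iff _).1 h1)

theorem jordan_absIndec (hl : 0 < l) {c : F} (hc : c ≠ 0) :
    CAbsIndec K F (fun _ => l) (oneR K (jordanM l c)) := by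
  intro F' _ φ
  refine ⟨fun h => ?_, fun h => ?_⟩
  · have := congrFun h 0
    simp at this; omega
  · rw [mapCRep_oneR, jordanM_map] at h
    exact jordanM_not_dfam hl (by simpa using hc) h.dfam

theorem jordan_inj (hl : 0 < l) {c c' : F}
    (h : CIso K F (fun _ => l) (oneR K (jordanM l c)) (oneR K (jordanM l c'))) : c = c' := by
  obtain ⟨g, hg, hc⟩ := oneR_iso_conv _ _ h
  have hcomm : ∀ (c : F) (A : Matrix (Fin l) (Fin l) F), Commute (Matrix.scalar (Fin l) c) A :=
    fun c A => Matrix.scalar_commute c (fun _ => Commute.all _ _) A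
  have h1 : g * shiftM F l = (shiftM F l + Matrix.scalar (Fin l) (c' - c)) * g := by
    have h2 := hcomm c g
    have h3 : g * shiftM F l = g * jordanM l c - Matrix.scalar (Fin l) c * g := by
      rw [h2.eq, jordanM, mul_add, add_sub_cancel_right]
    rw [h3, hc, jordanM, map_sub, ← sub_mul]
    congr 1
    abel
  set B := shiftM F l + Matrix.scalar (Fin l) (c' - c) with hB
  have hpow : ∀ k, g * shiftM F l ^ k = B ^ k * g := by
    intro k
    induction k with
    | zero => simp
    | succ k ih => rw [pow_succ, ← mul_assoc, ih, mul_assoc, h1, ← mul_assoc, ← pow_succ]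
  have hBl : IsNilpotent B := by
    refine ⟨l, ?_⟩
    have := hpow l
    rw [shiftM_nilp, mul_zero] at this
    exact (hg.mul_left_eq_zero).1 this.symm
  by_contra hne
  have hu : IsUnit B := jordanM_isUnit (sub_ne_zero.2 (Ne.symm hne))
  have : NeZero l := ⟨hl.ne'⟩
  have : Nontrivial (Matrix (Fin l) (Fin l) F) := inferInstance
  exact hBl.not_isUnit hu

theorem totN_oneR_injective {A : Matrix (Fin l) (Fin l) F} (hA : IsUnit A) :
    Function.Injective (totN (oneR K A)) := by
  rw [injective_iff_map_eq_zero]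
  intro y hy
  funext i
  have h1 : totN (oneR K A) y (i + 1) = 0 := by rw [hy]; rfl
  rw [totN_apply] at h1
  replace h1 : (if i = Fin.last K then A else 1 : Matrix (Fin l) (Fin l) F) *ᵥ y i = 0 := h1
  have h2 : IsUnit (if i = Fin.last K then A else 1 : Matrix (Fin l) (Fin l) F) := by
    split_ifs
    · exact hA
    · exact isUnit_one
  have h3 := Matrix.mulVec_injective_iff_isUnit.2 h2
  exact h3 (h1.trans (Matrix.mulVec_zero _).symm)

theorem unis_not_iso_jordan (hl : 0 < l) {A : Matrix (Fin l) (Fin l) F} (hA : IsUnit A)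
    {r : CRep K F (fun _ => l)} {n i b} (hr : Unis r n i b) (h : CIso K F (fun _ => l) r (oneR K A)) :
    False := by
  obtain ⟨G, hG, -⟩ := h.tot
  have hinj : Function.Injective (totN r) := by
    intro x y hxy
    have := congrArg G hxy
    rw [hG, hG] at this
    exact G.injective (totN_oneR_injective hA this)
  obtain ⟨k, hk⟩ := hr.nilp
  have h2 : Function.Injective (totN r ^ k) := by
    rw [Module.End.coe_pow]; exact hinj.iterate k
  have : NeZero l := ⟨hl.ne'⟩
  have h3 : (fun _ _ => 1 : Tot F (fun _ : Fin (K + 1) => l)) = 0 := by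
    apply h2
    rw [hk]; simp
  have := congrFun (congrFun h3 0) 0
  simp at this

/-- the classification of absolutely indecomposable invertible matrices -/
theorem jordan_classify [Fintype F] (hl : 0 < l) {A : Matrix (Fin l) (Fin l) F} (hA : IsUnit A)
    (h : CAbsIndec K F (fun _ => l) (oneR K A)) :
    ∃ c : F, c ≠ 0 ∧ CIso K F (fun _ => l) (oneR K A) (oneR K (jordanM l c)) := by
  have : NeZero l := ⟨hl.ne'⟩
  have hcommF : ∀ (c : F) (A : Matrix (Fin l) (Fin l) F), Commute (Matrix.scalar (Fin l) c) A :=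
    fun c A => Matrix.scalar_commute c (fun _ => Commute.all _ _) A
  -- step 1: single eigenvalue over the algebraic closure
  obtain ⟨c, hc⟩ : ∃ c : F, IsNilpotent (A - Matrix.scalar (Fin l) c) := by
    let E := AlgebraicClosure F
    let φ : F →+* E := algebraMap F E
    have hcommE : ∀ (c : E) (A : Matrix (Fin l) (Fin l) E), Commute (Matrix.scalar (Fin l) c) A :=
      fun c A => Matrix.scalar_commute c (fun _ => Commute.all _ _) A
    set B : Matrix (Fin l) (Fin l) E := A.map φ with hB
    have hind : ¬ DFam (oneR K B) := by
      intro hd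
      have := (h E φ).2
      rw [mapCRep_oneR] at this
      exact this hd.cdecomp
    obtain ⟨μ, hμ⟩ := Module.End.exists_eigenvalue (K := E) (Matrix.toLin' B)
    obtain ⟨v, hv⟩ := hμ.exists_hasEigenvector
    set S : Module.End E (Fin l → E) := Matrix.toLin' (B - Matrix.scalar (Fin l) μ) with hS
    have hSB : Commute S (Matrix.toLin' B) := by
      have h1 : Commute (B - Matrix.scalar (Fin l) μ) B := (Commute.refl B).sub_left (hcommE μ B)
      change S * _ = _ * S
      rw [hS, Module.End.mul_eq_comp, Module.End.mul_eq_comp, ← Matrix.toLin'_mul,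
        ← Matrix.toLin'_mul, h1.eq]
    obtain ⟨n, hcp, hn⟩ := fitting_compl S
    have hSv : S v = 0 := by
      have h1 := hv.apply_eq_smul
      rw [hS, map_sub, LinearMap.sub_apply, h1, Matrix.toLin'_apply]
      simp
    have hker : LinearMap.ker (S ^ n) ≠ ⊥ := by
      intro hb
      have : v ∈ LinearMap.ker (S ^ n) := by
        obtain ⟨m, rfl⟩ := Nat.exists_eq_add_of_le' hn
        rw [LinearMap.mem_ker, pow_succ, Module.End.mul_apply, hSv, map_zero]
      rw [hb, Submodule.mem_bot] at this
      exact hv.2 this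
    have hSBn : Commute (S ^ n) (Matrix.toLin' B) := hSB.pow_left n
    have hran : LinearMap.range (S ^ n) = ⊥ := by
      by_contra hne
      apply hind
      refine oneR_dfam B _ _ hcp hker hne ?_ ?_
      · intro x hx
        rw [LinearMap.mem_ker] at hx ⊢
        rw [← Matrix.toLin'_apply, ← Module.End.mul_apply, hSBn.eq, Module.End.mul_apply, hx,
          map_zero]
      · rintro _ ⟨x, rfl⟩
        refine ⟨Matrix.toLin' B x, ?_⟩
        rw [← Matrix.toLin'_apply, ← Module.End.mul_apply, hSBn.eq, Module.End.mul_apply]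
    have hSn : (B - Matrix.scalar (Fin l) μ) ^ n = 0 := by
      have h1 := LinearMap.range_eq_bot.1 hran
      rw [hS, ← Matrix.toLin'_pow] at h1
      exact (LinearEquiv.map_eq_zero_iff _).1 h1
    -- step 2: descent by Frobenius
    obtain ⟨p, hp⟩ := CharP.exists F
    obtain ⟨f, hpp, hq⟩ := FiniteField.card F p
    have : Fact p.Prime := ⟨hpp⟩
    have : CharP E p := charP_of_injective_algebraMap (algebraMap F E).injective p
    set Q := p ^ ((f : ℕ) * n) with hQ
    have hQn : n ≤ Q := by
      calc n ≤ (f : ℕ) * n := Nat.le_mul_of_pos_left _ f.pos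
        _ ≤ Q := (Nat.lt_pow_self hpp.one_lt).le
    have hBQ : B ^ Q = Matrix.scalar (Fin l) (μ ^ Q) := by
      have h1 : (B - Matrix.scalar (Fin l) μ) ^ Q = 0 := by
        obtain ⟨k, hk⟩ := Nat.exists_eq_add_of_le hQn
        rw [hk, pow_add, hSn, zero_mul]
      rw [hQ, sub_pow_char_pow_of_commute p _ (hcommE μ B).symm, ← hQ, sub_eq_zero] at h1
      rw [h1, map_pow]
    have hAQ : (A ^ Q).map φ = Matrix.scalar (Fin l) (μ ^ Q) := by
      rw [← hBQ, hB]
      exact map_pow φ.mapMatrix A Q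
    have hAs : A ^ Q = Matrix.scalar (Fin l) ((A ^ Q) 0 0) := by
      ext a b
      apply φ.injective
      have h1 := congrFun (congrFun hAQ a) b
      have h2 := congrFun (congrFun hAQ 0) 0
      simp only [Matrix.map_apply, Matrix.scalar_apply, Matrix.diagonal_apply] at h1 h2 ⊢
      rw [h1]
      by_cases hab : a = b
      · simp only [hab, if_true] at h2 ⊢; exact h2.symm
      · simp [hab]
    refine ⟨(A ^ Q) 0 0, Q, ?_⟩
    rw [hQ, sub_pow_char_pow_of_commute p _ (hcommF _ A).symm, ← hQ, ← map_pow]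
    have h3 : ((A ^ Q) 0 0) ^ Q = (A ^ Q) 0 0 := by
      have := FiniteField.pow_card_pow n ((A ^ Q) 0 0)
      rwa [hq, ← pow_mul] at this
    rw [h3, ← hAs, sub_self]
  -- step 3: cyclic basis
  have hc0 : c ≠ 0 := by
    rintro rfl
    rw [map_zero, sub_zero] at hc
    have : Nontrivial (Matrix (Fin l) (Fin l) F) := inferInstance
    exact hc.not_isUnit hA
  refine ⟨c, hc0, ?_⟩
  set S : Matrix (Fin l) (Fin l) F := A - Matrix.scalar (Fin l) c with hS
  have hN : IsNilpotent (Matrix.toLin' S) := by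
    obtain ⟨k, hk⟩ := hc
    exact ⟨k, by rw [← Matrix.toLin'_pow, hk, map_zero]⟩
  have hAS : A = S + Matrix.scalar (Fin l) c := by rw [hS]; abel
  rcases cyclic_dichotomy (K := 0) (fun _ => (1 : Module.End F (Fin l → F))) (Matrix.toLin' S) hN
    (fun _ _ => rfl) (fun _ _ => rfl) (fun i j _ hij => absurd (Fin.ext (by omega)) hij)
    (fun x => by simp) with hd | hd
  · exfalso
    obtain ⟨U, W, hcp, hU, hW, h1, h2, -, -⟩ := hd
    apply h.indec.2
    have key : ∀ V : Submodule F (Fin l → F), (∀ x ∈ V, Matrix.toLin' S x ∈ V) →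
        ∀ x ∈ V, A *ᵥ x ∈ V := by
      intro V hV x hx
      have := V.add_mem (hV x hx) (V.smul_mem c hx)
      convert this using 1
      rw [Matrix.toLin'_apply, hAS, Matrix.add_mulVec]
      simp
    exact oneR_dfam A U W hcp hU hW (key U h1) (key W h2)
  · rw [Module.finrank_fin_fun] at hd
    obtain ⟨-, b, -, hb⟩ := hd
    have he : ∀ t, b.equivFun (b t) = Pi.single t 1 := fun t => by
      funext a
      rw [Module.Basis.equivFun_self]
      simp [Pi.single_apply, eq_comm]
    have hlin : b.equivFun.toLinearMap ∘ₗ Matrix.toLin' S =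
        Matrix.toLin' (shiftM F l) ∘ₗ b.equivFun.toLinearMap := by
      apply b.ext
      intro t
      simp only [LinearMap.comp_apply, LinearEquiv.coe_coe]
      rw [he, hb, Matrix.toLin'_apply, shiftM_single]
      split_ifs with h1
      · rw [he]
      · rw [map_zero]
    set g : Matrix (Fin l) (Fin l) F := LinearMap.toMatrix' b.equivFun.toLinearMap with hg
    have hgS : g * S = shiftM F l * g := by
      have := congrArg LinearMap.toMatrix' hlin
      rwa [LinearMap.toMatrix'_comp, LinearMap.toMatrix'_comp, LinearMap.toMatrix'_toLin',
        LinearMap.toMatrix'_toLin'] at this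
    refine oneR_iso _ _ g ?_ ?_
    · rw [Matrix.isUnit_iff_isUnit_det, hg, LinearMap.det_toMatrix']
      exact LinearEquiv.isUnit_det' _
    · rw [hAS, jordanM, mul_add, add_mul, hgS, (hcommF c g).eq]

end jordan


section comb
open Fin.CommRing
variable {K : ℕ}

theorem pos_eq (i : Fin (K + 1)) (n : ℕ) : pos i n = i + (n : Fin (K + 1)) := by
  induction n with
  | zero => simp [pos]
  | succ n ih => rw [pos, ih, Nat.cast_succ, add_assoc]

theorem udim_succ (n : ℕ) (i j : Fin (K + 1)) :
    udim (n + 1) i j = udim n i j + if pos i n = j then 1 else 0 := by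
  have h : ∀ n, udim n i j = ∑ t : Fin n, if pos i t = j then 1 else 0 := by
    intro n
    rw [udim, Fintype.card_subtype, Finset.card_filter]
  rw [h, h, Fin.sum_univ_castSucc]
  simp

theorem udim_diff (n : ℕ) (i j : Fin (K + 1)) :
    udim n i (j + 1) + (if pos i n = j + 1 then 1 else 0) =
      udim n i j + (if i = j + 1 then 1 else 0) := by
  induction n with
  | zero =>
    have h : ∀ k, udim 0 i k = 0 := fun k => by simp [udim]
    rw [h, h]
    rfl
  | succ n ih =>
    rw [udim_succ, udim_succ, ih]
    simp only [pos, add_left_inj]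
    ring

theorem const_of_step (f : Fin (K + 1) → ℤ) (h : ∀ j, f (j + 1) = f j) (j : Fin (K + 1)) :
    f j = f 0 := by
  induction j using Fin.induction with
  | zero => rfl
  | succ i ih => rw [← ih, ← h i.castSucc, Fin.coeSucc_eq_succ]

theorem eq_of_step (f g : Fin (K + 1) → ℕ) (h : ∀ j, (f (j + 1) : ℤ) - f j = g (j + 1) - g j)
    (hs : ∑ j, f j = ∑ j, g j) : f = g := by
  have h1 := const_of_step (fun j => (f j : ℤ) - g j) (fun j => by have := h j; linarith)
  have h2 : ∑ j, ((f j : ℤ) - g j) = 0 := by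
    rw [Finset.sum_sub_distrib, sub_eq_zero]; exact_mod_cast hs
  have h3 : ∑ j : Fin (K + 1), ((f j : ℤ) - g j) = (K + 1) * ((f 0 : ℤ) - g 0) := by
    rw [Finset.sum_congr rfl fun j _ => h1 j]; simp; try ring
  rw [h2] at h3
  have h4 : ((f 0 : ℤ) - g 0) = 0 := by
    rcases mul_eq_zero.1 h3.symm with h | h
    · omega
    · exact h
  funext j
  have := h1 j
  omega

theorem udim_imag (l : ℕ) (i : Fin (K + 1)) : (fun _ => l) = udim ((K + 1) * l) i := by
  apply eq_of_step
  · intro j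
    have h := udim_diff ((K + 1) * l) i j
    have hp : pos i ((K + 1) * l) = i := by
      rw [pos_eq, (Fin.natCast_eq_zero).2 (Dvd.intro _ rfl), add_zero]
    rw [hp] at h
    have h2 : udim ((K + 1) * l) i (j + 1) = udim ((K + 1) * l) i j := by omega
    rw [h2]; simp
  · rw [udim_sum]; simp

theorem udim_real_unique {n : ℕ} {i i' : Fin (K + 1)} (hi : pos i n ≠ i)
    (h : udim n i = udim n i') : i = i' := by
  by_contra hne
  obtain ⟨j, rfl⟩ : ∃ j, i = j + 1 := ⟨i - 1, by simp⟩
  have h1 := udim_diff n (j + 1) j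
  have h2 := udim_diff n i' j
  rw [← h, if_neg (Ne.symm hne)] at h2
  rw [if_neg hi, if_pos rfl] at h1
  omega

theorem real_exists (d : Fin (K + 1) → ℕ) (h : qform K d = 1) :
    ∃ i, pos i (∑ j, d j) ≠ i ∧ d = udim (∑ j, d j) i := by
  set e : Fin (K + 1) → ℤ := fun j => (d (j + 1) : ℤ) - d j with he
  have shift : ∀ {R : Type} [AddCommMonoid R] (f : Fin (K + 1) → R), ∑ j, f (j + 1) = ∑ j, f j :=
    fun f => Equiv.sum_comp (Equiv.addRight (1 : Fin (K + 1))) f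
  have hs0 : ∑ j, e j = 0 := by
    rw [he, Finset.sum_sub_distrib, shift (fun j => (d j : ℤ)), sub_self]
  have hs2 : ∑ j, e j ^ 2 = 2 := by
    have h1 : ∀ j, e j ^ 2 = (d (j + 1) : ℤ) ^ 2 + (d j : ℤ) ^ 2 - 2 * ((d j : ℤ) * d (j + 1)) :=
      fun j => by simp only [he]; ring
    rw [Finset.sum_congr rfl fun j _ => h1 j, Finset.sum_sub_distrib, Finset.sum_add_distrib,
      shift (fun j => (d j : ℤ) ^ 2), ← Finset.mul_sum]
    unfold qform at h
    linarith
  have hnz : ¬ ∀ j, e j = 0 := by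
    intro h0
    rw [Finset.sum_eq_zero fun j _ => by rw [h0 j]; ring] at hs2
    norm_num at hs2
  obtain ⟨a, ha⟩ : ∃ a, 0 < e a := by
    by_contra hcon
    push Not at hcon
    exact hnz fun j => (Finset.sum_eq_zero_iff_of_nonpos fun j _ => hcon j).1 hs0 j (Finset.mem_univ _)
  obtain ⟨b, hb⟩ : ∃ b, e b < 0 := by
    by_contra hcon
    push Not at hcon
    exact hnz fun j => (Finset.sum_eq_zero_iff_of_nonneg fun j _ => hcon j).1 hs0 j (Finset.mem_univ _)
  have hab : a ≠ b := by rintro rfl; omega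
  have hform : ∀ j, e j = (if j = a then 1 else 0) - (if j = b then 1 else 0) := by
    have h1 : ∀ j, (e j - ((if j = a then 1 else 0) - (if j = b then 1 else 0))) ^ 2 =
        e j ^ 2 - (if j = a then 2 * e j else 0) + (if j = b then 2 * e j else 0)
          + (if j = a then 1 else 0) + (if j = b then 1 else 0) := by
      intro j
      by_cases hja : j = a
      · have hjb : j ≠ b := fun hh => hab (hja.symm.trans hh)
        simp only [if_pos hja, if_neg hjb]; ring
      · by_cases hjb : j = b
        · simp only [if_neg hja, if_pos hjb]; ring
        · simp only [if_neg hja, if_neg hjb]; ring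
    have h2 : ∑ j, (e j - ((if j = a then 1 else 0) - (if j = b then 1 else 0))) ^ 2 ≤ 0 := by
      rw [Finset.sum_congr rfl fun j _ => h1 j]
      simp only [Finset.sum_add_distrib, Finset.sum_sub_distrib, Finset.sum_ite_eq',
        Finset.mem_univ, if_true, hs2]
      omega
    have h3 := le_antisymm h2 (Finset.sum_nonneg fun j _ => sq_nonneg _)
    intro j
    have h4 := (Finset.sum_eq_zero_iff_of_nonneg fun j _ => sq_nonneg _).1 h3 j (Finset.mem_univ _)
    have h5 := pow_eq_zero_iff (two_ne_zero) |>.1 h4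
    linarith
  have hpos : pos (a + 1) (∑ j, d j) = b + 1 := by
    rw [pos_eq]
    have h1 : ∑ j : Fin (K + 1), (j + 1) * ((e j : ℤ) : Fin (K + 1)) = a - b := by
      have : ∀ j : Fin (K + 1), (j + 1) * ((e j : ℤ) : Fin (K + 1)) =
          (if j = a then j + 1 else 0) - (if j = b then j + 1 else 0) := by
        intro j
        rw [hform j]
        push_cast
        split_ifs <;> simp
      rw [Finset.sum_congr rfl fun j _ => this j]
      simp only [Finset.sum_sub_distrib, Finset.sum_ite_eq', Finset.mem_univ, if_true]
      ring
    have h2 : ∑ j : Fin (K + 1), (j + 1) * ((e j : ℤ) : Fin (K + 1)) =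
        - ((∑ j, d j : ℕ) : Fin (K + 1)) := by
      have : ∀ j : Fin (K + 1), (j + 1) * ((e j : ℤ) : Fin (K + 1)) =
          (j + 1) * (d (j + 1) : Fin (K + 1)) - j * (d j : Fin (K + 1)) - (d j : Fin (K + 1)) := by
        intro j
        simp only [he]
        push_cast
        ring
      rw [Finset.sum_congr rfl fun j _ => this j, Finset.sum_sub_distrib, Finset.sum_sub_distrib,
        shift (fun j => j * (d j : Fin (K + 1))), sub_self, zero_sub, Nat.cast_sum]
    have h3 : a - b = - ((∑ j, d j : ℕ) : Fin (K + 1)) := h1.symm.trans h2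
    have h4 : ((∑ j, d j : ℕ) : Fin (K + 1)) = b - a := by rw [← neg_sub, h3, neg_neg]
    rw [h4]; ring
  refine ⟨a + 1, ?_, ?_⟩
  · rw [hpos]
    intro hh
    exact hab (add_right_cancel hh).symm
  · apply eq_of_step
    · intro j
      have h1 := udim_diff (∑ j, d j) (a + 1) j
      rw [hpos] at h1
      have h2 := hform j
      simp only [he] at h2
      rw [h2]
      simp only [add_left_inj] at h1
      have e1 : (a = j) = (j = a) := propext eq_comm
      have e2 : (b = j) = (j = b) := propext eq_comm
      simp only [e1, e2] at h1
      split_ifs at h1 ⊢ <;> omega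
    · rw [udim_sum]

end comb

section final
variable {K : ℕ} {F : Type} [Field F]

theorem quot_exact {d : Fin (K + 1) → ℕ} {x y : { r : CRep K F d // CAbsIndec K F d r }}
    (h : Quot.mk (fun r r' : { r : CRep K F d // CAbsIndec K F d r } => CIso K F d r.1 r'.1) x =
      Quot.mk _ y) : CIso K F d x.1 y.1 := by
  have heq : Equivalence (fun r r' : { r : CRep K F d // CAbsIndec K F d r } =>
      CIso K F d r.1 r'.1) := ⟨fun r => CIso.refl' r.1, fun h => h.symm', fun h h' => h.trans' h'⟩
  exact heq.eqvGen_iff.1 (Quot.eqvGen_exact h)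

theorem kac_imag (K : ℕ) (F : Type) [Field F] [Fintype F] (l : ℕ) (hl : 1 ≤ l) :
    kacCount K F (fun _ => l) = Fintype.card F + K := by
  classical
  have hn : 0 < (K + 1) * l := Nat.mul_pos (Nat.succ_pos _) hl
  have hsum : ∑ _i : Fin (K + 1), l = (K + 1) * l := by simp
  choose R hR hRu using fun i : Fin (K + 1) =>
    exists_std F (fun _ => l) ((K + 1) * l) hn i (udim_imag l i)
  choose B hB using hRu
  let f : {c : F // c ≠ 0} ⊕ Fin (K + 1) → { r : CRep K F (fun _ => l) // CAbsIndec K F _ r } :=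
    Sum.elim (fun c => ⟨oneR K (jordanM l c.1), jordan_absIndec hl c.2⟩) (fun i => ⟨R i, hR i⟩)
  have hbij : Function.Bijective (fun x => Quot.mk (fun r r' : { r : CRep K F (fun _ => l) //
      CAbsIndec K F (fun _ => l) r } => CIso K F (fun _ => l) r.1 r'.1) (f x)) := by
    constructor
    · rintro (c | i) (c' | i') h
      · have h1 := quot_exact h
        rw [Subtype.ext (jordan_inj hl h1)]
      · exact (unis_not_iso_jordan hl (jordanM_isUnit c.2) (hB i') (quot_exact h).symm').elim
      · exact (unis_not_iso_jordan hl (jordanM_isUnit c'.2) (hB i) (quot_exact h)).elim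
      · rw [(hB i).start_unique hn (hB i') (quot_exact h)]
    · intro q
      obtain ⟨⟨r, hr⟩, rfl⟩ := Quot.exists_rep q
      obtain ⟨hd, hdf⟩ := hr.indec
      rcases fitting_rep r hdf with hnil | hinj
      · have hu := nilp_unis r hd hdf hnil
        rw [hsum] at hu
        obtain ⟨i, b, hb⟩ := hu
        exact ⟨Sum.inr i, Quot.sound ((hB i).iso hb)⟩
      · obtain ⟨A, hA, hiso⟩ := exists_oneR_iso r (dim_of_injective r hinj).1
        obtain ⟨c, hc, hiso'⟩ := jordan_classify hl hA (hr.of_iso hiso)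
        refine ⟨Sum.inl ⟨c, hc⟩, Quot.sound ?_⟩
        exact (hiso.trans' hiso').symm'
  rw [kacCount, ← Nat.card_eq_of_bijective _ hbij, Nat.card_sum, Nat.card_eq_fintype_card,
    Nat.card_eq_fintype_card, Fintype.card_fin]
  have : Fintype.card {c : F // c ≠ 0} = Fintype.card F - 1 := by
    rw [Fintype.card_subtype_compl]; simp
  have h1 : 0 < Fintype.card F := Fintype.card_pos
  omega

theorem kac_real (K : ℕ) (F : Type) [Field F] (d : Fin (K + 1) → ℕ) (hd : d ≠ 0)
    (hq : qform K d = 1) : kacCount K F d = 1 := by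
  obtain ⟨i, hi, hdi⟩ := real_exists d hq
  have hn : 0 < ∑ j, d j := by
    obtain ⟨i, hi⟩ := Function.ne_iff.1 hd
    exact Finset.sum_pos' (fun _ _ => Nat.zero_le _) ⟨i, Finset.mem_univ _, Nat.pos_of_ne_zero hi⟩
  obtain ⟨R, hR, B, hB⟩ := exists_std F d _ hn i hdi
  rw [kacCount, Nat.card_eq_one_iff_exists]
  refine ⟨Quot.mk _ ⟨R, hR⟩, fun q => ?_⟩
  obtain ⟨⟨r, hr⟩, rfl⟩ := Quot.exists_rep q
  obtain ⟨-, hdf⟩ := hr.indec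
  rcases fitting_rep r hdf with hnil | hinj
  · obtain ⟨i', b, hb⟩ := nilp_unis r hd hdf hnil
    have hii : i = i' := udim_real_unique hi (hdi.symm.trans hb.dim)
    subst hii
    exact Quot.sound (hb.iso hB)
  · exfalso
    have h1 := (dim_of_injective r hinj).2
    have : qform K d = 0 := by
      unfold qform
      rw [sub_eq_zero]
      exact Finset.sum_congr rfl fun j _ => by rw [h1 j]; ring
    omega

theorem card_imag (K N : ℕ) (hN : 1 ≤ N) :
    Nat.card { d' : Fin (K + 1) → ℕ // (∑ i, d' i) = N ∧ ∃ l : ℕ, 1 ≤ l ∧ d' = fun _ => l }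
      = if (K + 1) ∣ N then 1 else 0 := by
  split_ifs with h
  · obtain ⟨l, rfl⟩ := h
    rw [Nat.card_eq_one_iff_exists]
    refine ⟨⟨fun _ => l, by simp, l, Nat.pos_of_mul_pos_left hN, rfl⟩, ?_⟩
    rintro ⟨_, h1, l', -, rfl⟩
    simp at h1
    simp [h1]
  · rw [Nat.card_eq_zero]
    left
    refine ⟨?_⟩
    rintro ⟨_, h1, l', -, rfl⟩
    apply h
    simp at h1
    exact Dvd.intro _ h1

end final


/-- The Kac polynomial of the cyclic quiver `Q^K` with `K+1`
vertices satisfies `a_{Q^K,d}(q) = q + K` for `d ∈ ℤ_{>0}·δ` (positive imaginary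
roots) and `a_{Q^K,d}(q) = 1` for `d` a positive real root of `ŝl_{K+1}`; in
particular, the number of dimension vectors `d` with `|d| = N` supporting absolutely
indecomposable representations, weighted by `a_{Q^K,d}(1)`, is `1 + K` for each
multiple of `δ` plus `1` for each real root. -/
theorem stmt_18 (K : ℕ) (hK : 1 ≤ K) (F : Type) [Field F] [Fintype F]
    (d : Fin (K + 1) → ℕ) :
    ((∃ l : ℕ, 1 ≤ l ∧ d = fun _ => l) →
      kacCount K F d = Fintype.card F + K) ∧
    ((d ≠ 0 ∧ qform K d = 1) → kacCount K F d = 1) ∧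
    (∀ N : ℕ, 1 ≤ N →
      Nat.card { d' : Fin (K + 1) → ℕ //
          (∑ i, d' i) = N ∧ ∃ l : ℕ, 1 ≤ l ∧ d' = fun _ => l } * (1 + K)
        + Nat.card { d' : Fin (K + 1) → ℕ //
            (∑ i, d' i) = N ∧ d' ≠ 0 ∧ qform K d' = 1 }
      = (if (K + 1) ∣ N then 1 + K else 0)
        + Nat.card { d' : Fin (K + 1) → ℕ //
            (∑ i, d' i) = N ∧ d' ≠ 0 ∧ qform K d' = 1 }) := by
  refine ⟨?_, ?_, ?_⟩
  · rintro ⟨l, hl, rfl⟩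
    exact kac_imag K F l hl
  · rintro ⟨h0, h1⟩
    exact kac_real K F d h0 h1
  · intro N hN
    rw [card_imag K N hN]
    split_ifs <;> simp
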